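/- arXiv:2405.06871 — 2 statements merged into one kernel-verified Lean document; each statement's English description precedes it below -/
import Mathlib

section
/- Assume A1, A2 and A4, and fix r ≥ 1. Consider the stochastic gradient Euler–Maruyama chain (X̃_n,Ṽ_n) with time step h and damping rate γ, started from initial data with E(|X̃₀|+|Ṽ₀|+1)^{2r} < ∞. There exists γ₀ > 0 such that whenever γ ≥ γ₀, there exist constants C, h₀ > 0 (depending on r, γ, m, R, C₀, C₁, d but not on h or n) such that for every 0 < h ≤ h₀: sup_{n≥0} E(|X̃_n|+|Ṽ_n|+1)^{2r} ≤ C·E(|X̃₀|+|Ṽ₀|+1)^{2r}. -/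
open MeasureTheory ProbabilityTheory RealInnerProductSpace
open scoped ENNReal

lemma aux_pow (t : ℝ) (ht : -1 ≤ t) (k : ℕ) :
    (1 + t) ^ k ≤ 1 + k * t + (k:ℝ) ^ 2 * (t ^ 2 * (1 + |t|) ^ k) := by
  induction k with
  | zero => simp
  | succ k ih =>
    have h0 : 0 ≤ 1 + t := by linarith
    have h1 := mul_le_mul_of_nonneg_right ih h0
    have h2 : 1 ≤ (1 + |t|) ^ (k+1) := one_le_pow₀ (by linarith [abs_nonneg t])
    have h3 : (k:ℝ) ^ 2 * (t ^ 2 * (1 + |t|) ^ k) * (1 + t)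
        ≤ (k:ℝ) ^ 2 * (t ^ 2 * (1 + |t|) ^ k) * (1 + |t|) :=
      mul_le_mul_of_nonneg_left (by linarith [le_abs_self t]) (by positivity)
    have h4 : (k:ℝ) * t ^ 2 ≤ (2 * k + 1) * (t ^ 2 * (1 + |t|) ^ (k+1)) := by
      have : (k:ℝ) * t^2 * 1 ≤ (2*k+1) * t^2 * (1 + |t|) ^ (k+1) := by
        gcongr
        linarith [(Nat.cast_nonneg k : (0:ℝ) ≤ k)]
      linarith
    have h5 : (1 + t) ^ (k+1) = (1 + t) ^ k * (1 + t) := pow_succ _ _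
    have h6 : (1 + |t|) ^ (k+1) = (1 + |t|) ^ k * (1 + |t|) := pow_succ _ _
    rw [h5]
    refine h1.trans ?_
    push_cast
    rw [h6] at h4 ⊢
    linarith

lemma aux_bern (r : ℝ) (hr : 1 ≤ r) : ∃ N : ℕ, ∃ C : ℝ, 0 ≤ C ∧ ∀ t : ℝ, -1 ≤ t →
    (1 + t) ^ r ≤ 1 + r * t + C * (t ^ 2 * (1 + |t|) ^ N) := by
  obtain ⟨k, hk⟩ := exists_nat_ge r
  have hk0 : (0:ℝ) < k := by linarith
  refine ⟨k, r / k * (k:ℝ)^2, by positivity, fun t ht => ?_⟩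
  have h0 : 0 ≤ 1 + t := by linarith
  have e : (1 + t) ^ r = (1 + ((1 + t) ^ k - 1)) ^ (r / k) := by
    rw [add_sub_cancel, ← Real.rpow_natCast, ← Real.rpow_mul h0]
    congr 1; field_simp
  rw [e]
  have h1 := rpow_one_add_le_one_add_mul_self (s := (1+t)^k - 1) (p := r / k)
    (by linarith [pow_nonneg h0 k]) (by positivity) (by rw [div_le_one hk0]; exact hk)
  have h2 := mul_le_mul_of_nonneg_left (aux_pow t ht k) (show 0 ≤ r / k by positivity)
  have h3 : r / k * (k * t) = r * t := by field_simp
  nlinarith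


set_option maxHeartbeats 2000000 in
lemma aux_step {E : Type*} [NormedAddCommGroup E] [InnerProductSpace ℝ E] [MeasurableSpace E]
    (ν : Measure E) [IsProbabilityMeasure ν]
    (hmom : ∀ N : ℕ, Integrable (fun ξ : E => (1 + ‖ξ‖) ^ N) ν)
    (hint : ∀ p : E, Integrable (fun ξ : E => ⟪p, ξ⟫) ν)
    (hmean : ∀ p : E, ∫ ξ, ⟪p, ξ⟫ ∂ν = 0)
    (r : ℝ) (hr : 1 ≤ r) (l K Cp : ℝ) (hl : 0 < l) (hK : 0 < K) (hCp : 0 < Cp) :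
    ∃ α > (0:ℝ), ∃ K4 ≥ (0:ℝ), ∃ h₀ > (0:ℝ), ∀ h, 0 < h → h ≤ h₀ → α * h ≤ 1 ∧
      ∀ (G : ℝ) (p : E) (g : E → ℝ), 1 ≤ G → ‖p‖ ≤ Cp * √h * √G → (∀ ξ, 0 ≤ g ξ) →
        (∀ ξ, g ξ ≤ G + h * (-l * G + K * (1 + ‖ξ‖) ^ 2) + ⟪p, ξ⟫) →
        ∫⁻ ξ, ENNReal.ofReal (g ξ ^ r) ∂ν ≤ ENNReal.ofReal ((1 - α * h) * G ^ r + K4 * h) := by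
  obtain ⟨N, C, hC, hbern⟩ := aux_bern r hr
  have hr0 : 0 < r := by linarith
  set B := l + K + Cp with hB
  have hB0 : 0 < B := by positivity
  set C6 := r * K + C * (2 * B ^ 2 * (1 + 2 * B) ^ N) with hC6
  have hC60 : 0 ≤ C6 := by positivity
  set M := 2 * N + 4 with hM
  set D := C6 * ∫ ξ, (1 + ‖ξ‖) ^ M ∂ν with hD
  have hD0 : 0 ≤ D := mul_nonneg hC60 (integral_nonneg fun ξ => by positivity)
  set T := 1 + 4 * D / (r * l) with hT
  have hT1 : 1 ≤ T := by
    have : 0 ≤ 4 * D / (r * l) := by positivity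
    linarith
  refine ⟨r * l / 4, by positivity, D * T ^ r, by positivity,
    min 1 (min (r * l / (2 * (D + 1))) (4 / (r * l))), by positivity, ?_⟩
  intro h hh hle
  have hh1 : h ≤ 1 := hle.trans (min_le_left _ _)
  have hh2 : h ≤ r * l / (2 * (D + 1)) := hle.trans ((min_le_right _ _).trans (min_le_left _ _))
  have hh3 : h ≤ 4 / (r * l) := hle.trans ((min_le_right _ _).trans (min_le_right _ _))
  refine ⟨?_, ?_⟩
  · rw [le_div_iff₀ (by positivity)] at hh3
    linarith
  intro G p g hG hp hg0 hg
  have hG0 : 0 < G := by linarith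
  have hGr : 0 ≤ G ^ r := by positivity
  -- pointwise bound
  have key : ∀ ξ, g ξ ^ r ≤ G ^ r * (1 - r * l * h + r / G * ⟪p, ξ⟫
      + C6 * (h ^ 2 + h / G) * (1 + ‖ξ‖) ^ M) := by
    intro ξ
    set ψ := 1 + ‖ξ‖ with hψ
    have hψ1 : 1 ≤ ψ := by simp [hψ]
    set t := h * (-l + K * ψ ^ 2 / G) + ⟪p, ξ⟫ / G with ht
    have e1 : G + h * (-l * G + K * ψ ^ 2) + ⟪p, ξ⟫ = G * (1 + t) := by
      rw [ht]; field_simp; ring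
    have hgt : g ξ ≤ G * (1 + t) := e1 ▸ hg ξ
    have ht1 : -1 ≤ t := by
      have : 0 ≤ 1 + t := by
        by_contra hneg
        push Not at hneg
        have := mul_neg_of_pos_of_neg hG0 hneg
        linarith [hg0 ξ]
      linarith
    have hb := hbern t ht1
    have h1 : g ξ ^ r ≤ G ^ r * (1 + t) ^ r := by
      rw [← Real.mul_rpow hG0.le (by linarith)]
      exact Real.rpow_le_rpow (hg0 ξ) hgt hr0.le
    refine h1.trans (mul_le_mul_of_nonneg_left (hb.trans ?_) hGr)
    set a := √h with ha
    have ha0 : 0 ≤ a := Real.sqrt_nonneg _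
    have haa : h = a ^ 2 := (Real.sq_sqrt hh.le).symm
    have ha1 : a ≤ 1 := by rw [ha]; exact Real.sqrt_le_one.mpr hh1
    set q := (√G)⁻¹ with hq
    have hsG : 1 ≤ √G := Real.one_le_sqrt.mpr hG
    have hq0 : 0 ≤ q := by positivity
    have hq1 : q ≤ 1 := inv_le_one_of_one_le₀ hsG
    have hqq : 1 / G = q ^ 2 := by
      rw [hq, inv_pow, Real.sq_sqrt hG0.le, one_div]
    have hsq : √G / G = q := by
      rw [hq, div_eq_iff hG0.ne']
      nth_rewrite 3 [← Real.mul_self_sqrt hG0.le]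
      field_simp
    have hin : |⟪p, ξ⟫ / G| ≤ Cp * a * q * ψ := by
      rw [abs_div, abs_of_pos hG0]
      calc |⟪p, ξ⟫| / G ≤ (Cp * a * √G * ψ) / G := by
            gcongr
            refine (abs_real_inner_le_norm p ξ).trans ?_
            gcongr
            linarith
        _ = Cp * a * (√G / G) * ψ := by ring
        _ = _ := by rw [hsq]
    have habs : |t| ≤ B * (a ^ 2 + a * ψ ^ 2 * q) := by
      have e2 : h * (-l + K * ψ ^ 2 / G) = -(l * a ^ 2) + K * a ^ 2 * ψ ^ 2 * q ^ 2 := by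
        rw [← haa, ← hqq]; ring
      rw [ht, e2]
      have h2 : |-(l * a ^ 2) + K * a ^ 2 * ψ ^ 2 * q ^ 2| ≤ l * a ^ 2 + K * a ^ 2 * ψ ^ 2 * q ^ 2 := by
        refine (abs_add_le _ _).trans ?_
        rw [abs_neg, abs_of_nonneg (by positivity : 0 ≤ l * a ^ 2), abs_of_nonneg (by positivity)]
      have h3 : K * a ^ 2 * ψ ^ 2 * q ^ 2 ≤ K * (a * ψ ^ 2 * q) := by
        have : a ^ 2 * q ^ 2 ≤ a * q := by
          have : a * q ≤ 1 := mul_le_one₀ ha1 hq0 hq1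
          have e : a ^ 2 * q ^ 2 = (a * q) * (a * q) := by ring
          rw [e]
          exact mul_le_of_le_one_left (mul_nonneg ha0 hq0) this
        calc K * a ^ 2 * ψ ^ 2 * q ^ 2 = K * ψ ^ 2 * (a ^ 2 * q ^ 2) := by ring
          _ ≤ K * ψ ^ 2 * (a * q) := by gcongr
          _ = _ := by ring
      have h4 : Cp * a * q * ψ ≤ Cp * (a * ψ ^ 2 * q) := by
        have : ψ ≤ ψ ^ 2 := le_self_pow₀ hψ1 two_ne_zero
        calc Cp * a * q * ψ ≤ Cp * a * q * ψ ^ 2 := by gcongr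
          _ = _ := by ring
      have h5 : 0 ≤ a * ψ ^ 2 * q := by positivity
      have h6 : 0 ≤ a ^ 2 := by positivity
      refine (abs_add_le _ _).trans ?_
      rw [hB]
      linarith [mul_nonneg hCp.le h6, mul_nonneg hK.le h6, mul_nonneg hl.le h5]
    have hψ4 : 1 ≤ ψ ^ 4 := one_le_pow₀ hψ1
    have hsqt : t ^ 2 ≤ 2 * B ^ 2 * ψ ^ 4 * (h ^ 2 + h / G) := by
      have e3 : h ^ 2 + h / G = a ^ 4 + a ^ 2 * q ^ 2 := by
        rw [← hqq, ← haa, show a ^ 4 = (a^2)^2 by ring, ← haa]; ring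
      rw [e3, ← sq_abs]
      calc |t| ^ 2 ≤ (B * (a ^ 2 + a * ψ ^ 2 * q)) ^ 2 := by gcongr
        _ ≤ 2 * B ^ 2 * (a ^ 4 + a ^ 2 * ψ ^ 4 * q ^ 2) := by
            have := mul_nonneg (sq_nonneg B) (sq_nonneg (a ^ 2 - a * ψ ^ 2 * q))
            linarith
        _ ≤ 2 * B ^ 2 * (ψ ^ 4 * a ^ 4 + a ^ 2 * ψ ^ 4 * q ^ 2) := by
            gcongr
            exact le_mul_of_one_le_left (by positivity) hψ4
        _ = _ := by ring
    have h1t : 1 + |t| ≤ (1 + 2 * B) * ψ ^ 2 := by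
      have hp2 : 1 ≤ ψ ^ 2 := one_le_pow₀ hψ1
      have h2 : a ^ 2 ≤ ψ ^ 2 := (pow_le_one₀ ha0 ha1).trans hp2
      have h3 : a * ψ ^ 2 * q ≤ ψ ^ 2 := by
        have : a * q ≤ 1 := mul_le_one₀ ha1 hq0 hq1
        calc a * ψ ^ 2 * q = (a * q) * ψ ^ 2 := by ring
          _ ≤ ψ ^ 2 := mul_le_of_le_one_left (by positivity) this
      have : B * (a ^ 2 + a * ψ ^ 2 * q) ≤ B * (ψ ^ 2 + ψ ^ 2) := by gcongr
      linarith
    have h7 : t ^ 2 * (1 + |t|) ^ N ≤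
        (2 * B ^ 2 * (1 + 2 * B) ^ N) * (h ^ 2 + h / G) * ψ ^ M := by
      calc t ^ 2 * (1 + |t|) ^ N ≤ (2 * B ^ 2 * ψ ^ 4 * (h ^ 2 + h / G))
            * ((1 + 2 * B) * ψ ^ 2) ^ N := by gcongr
        _ = _ := by rw [hM, mul_pow, pow_add, pow_mul]; ring
    have h8 : h * (K * ψ ^ 2 / G) ≤ K * (h ^ 2 + h / G) * ψ ^ M := by
      have : ψ ^ 2 ≤ ψ ^ M := pow_le_pow_right₀ hψ1 (by omega)
      calc h * (K * ψ ^ 2 / G) = K * (h / G) * ψ ^ 2 := by ring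
        _ ≤ K * (h ^ 2 + h / G) * ψ ^ M := by
          gcongr
          linarith [sq_nonneg h]
    have h9 := mul_le_mul_of_nonneg_left h7 hC
    have h10 := mul_le_mul_of_nonneg_left h8 hr0.le
    have e4 : r * t = - (r * l * h) + r * (h * (K * ψ ^ 2 / G)) + r / G * ⟪p, ξ⟫ := by
      rw [ht]; ring
    rw [e4, hC6]
    linarith
  have hi1 : Integrable (fun ξ : E => C6 * (h ^ 2 + h / G) * (1 + ‖ξ‖) ^ M) ν :=
    (hmom M).const_mul _
  have hi2 : Integrable (fun ξ : E => 1 - r * l * h + r / G * ⟪p, ξ⟫) ν :=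
    (integrable_const _).add ((hint p).const_mul _)
  have hi : Integrable (fun ξ => G ^ r * (1 - r * l * h + r / G * ⟪p, ξ⟫
      + C6 * (h ^ 2 + h / G) * (1 + ‖ξ‖) ^ M)) ν := (hi2.add hi1).const_mul _
  have hI : ∫ ξ, G ^ r * (1 - r * l * h + r / G * ⟪p, ξ⟫
      + C6 * (h ^ 2 + h / G) * (1 + ‖ξ‖) ^ M) ∂ν
      = G ^ r * (1 - r * l * h + D * (h ^ 2 + h / G)) := by
    rw [integral_const_mul, integral_add hi2 hi1,
      integral_add (integrable_const _) ((hint p).const_mul _), integral_const_mul,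
      integral_const_mul, hmean]
    simp [hD]
    left; ring
  calc ∫⁻ ξ, ENNReal.ofReal (g ξ ^ r) ∂ν
      ≤ ∫⁻ ξ, ENNReal.ofReal (G ^ r * (1 - r * l * h + r / G * ⟪p, ξ⟫
      + C6 * (h ^ 2 + h / G) * (1 + ‖ξ‖) ^ M)) ∂ν :=
        lintegral_mono fun ξ => ENNReal.ofReal_le_ofReal (key ξ)
    _ = ENNReal.ofReal (G ^ r * (1 - r * l * h + D * (h ^ 2 + h / G))) := by
        rw [← hI, ofReal_integral_eq_lintegral_ofReal hi]
        exact Filter.Eventually.of_forall fun ξ =>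
          (Real.rpow_nonneg (hg0 ξ) r).trans (key ξ)
    _ ≤ _ := by
        apply ENNReal.ofReal_le_ofReal
        have h1 : D * h ≤ r * l / 2 := by
          rw [le_div_iff₀ (by positivity)] at hh2
          nlinarith
        have h2 : G ^ r * (D / G) ≤ r * l / 4 * G ^ r + D * T ^ r := by
          rcases le_total T G with hc | hc
          · have : D / G ≤ r * l / 4 := by
              rw [div_le_iff₀ hG0]
              have : 4 * D / (r * l) ≤ G := by linarith
              rw [div_le_iff₀ (by positivity)] at this
              linarith
            have := mul_le_mul_of_nonneg_left this hGr
            have h0 : 0 ≤ D * T ^ r := by positivity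
            linarith
          · have : D / G ≤ D := div_le_self hD0 hG
            have h5 : G ^ r ≤ T ^ r := Real.rpow_le_rpow hG0.le hc hr0.le
            have h6 : G ^ r * (D / G) ≤ T ^ r * D := by gcongr
            have h0 : 0 ≤ r * l / 4 * G ^ r := by positivity
            linarith
        have h3 := mul_le_mul_of_nonneg_left h1 (mul_nonneg hGr hh.le)
        have h4 := mul_le_mul_of_nonneg_left h2 hh.le
        have e : G ^ r * (1 - r * l * h + D * (h ^ 2 + h / G)) = G ^ r - G ^ r * h * (r * l)
          + G ^ r * h * (D * h) + h * (G ^ r * (D / G)) := by ring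
        rw [e]
        linarith

/-- Lyapunov function. -/
noncomputable def GG {E : Type*} [NormedAddCommGroup E] [InnerProductSpace ℝ E] (γ : ℝ) (x v : E) : ℝ :=
  1 + ‖γ • x + v‖ ^ 2 + ‖v‖ ^ 2

set_option maxHeartbeats 2000000 in
lemma aux_drift {E : Type*} [NormedAddCommGroup E] [InnerProductSpace ℝ E]
    (C₀ C₁ m γ : ℝ) (hC₀ : 0 < C₀) (hC₁ : 0 < C₁) (hm : 0 < m) (hγ1 : 1 ≤ γ)
    (hγ : 16 * C₁ ^ 2 ≤ m * γ ^ 2) :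
    ∃ l > (0:ℝ), ∃ K > (0:ℝ), ∃ Cp > (0:ℝ), ∃ h₀ > (0:ℝ), ∀ h, 0 < h → h ≤ h₀ →
      ∀ x v b : E, ‖b‖ ≤ C₁ * (1 + ‖x‖) → m * ‖x‖ ^ 2 - C₀ ≤ ⟪x, b⟫ →
      ∃ p : E, ‖p‖ ≤ Cp * √h * √(GG γ x v) ∧
        ∀ ξ, GG γ (x + h • v) (v - h • b - (γ * h) • v + √(2 * γ * h) • ξ) ≤
          GG γ x v + h * (-l * GG γ x v + K * (1 + ‖ξ‖) ^ 2) + ⟪p, ξ⟫ := by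
  have hγ0 : 0 < γ := by linarith
  set l := min (m / (2 * γ)) (γ / 6) with hl
  have hl0 : 0 < l := by positivity
  have hl1 : l * (2 * γ) ≤ m := by
    rw [← le_div_iff₀ (by positivity)]; exact min_le_left _ _
  have hl2 : l * 6 ≤ γ := by
    rw [← le_div_iff₀ (by positivity)]; exact min_le_right _ _
  set K0 := 2 * γ * C₀ + 8 * C₁ ^ 2 + 6 * C₁ ^ 2 with hK0
  refine ⟨l, hl0, K0 + l + 4 * γ, by positivity, 2 * √(2 * γ) * (4 + 6 * C₁ + γ), by positivity,
    min 1 (min (γ * m / (12 * C₁ ^ 2)) (1 / (4 * γ))), by positivity, ?_⟩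
  intro h hh hle x v b hb hxb
  have hh1 : h ≤ 1 := hle.trans (min_le_left _ _)
  have hh2 : h ≤ γ * m / (12 * C₁ ^ 2) := hle.trans ((min_le_right _ _).trans (min_le_left _ _))
  have hh3 : h ≤ 1 / (4 * γ) := hle.trans ((min_le_right _ _).trans (min_le_right _ _))
  rw [le_div_iff₀ (by positivity)] at hh2 hh3
  set s := √(2 * γ * h) with hs
  have hss : s ^ 2 = 2 * γ * h := Real.sq_sqrt (by positivity)
  have hs' : s = √(2 * γ) * √h := by rw [hs, Real.sqrt_mul (by positivity)]
  set a := γ • x + v - h • b with ha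
  set c := v - h • b - (γ * h) • v with hc
  refine ⟨(2 * s) • (a + c), ?_, ?_⟩
  · set G := GG γ x v with hG
    have hv : ‖v‖ ≤ √G := by
      apply Real.le_sqrt_of_sq_le
      rw [hG, GG]; nlinarith [sq_nonneg ‖γ • x + v‖]
    have hy : ‖γ • x + v‖ ≤ √G := by
      apply Real.le_sqrt_of_sq_le
      rw [hG, GG]; nlinarith [sq_nonneg ‖v‖]
    have h1 : 1 ≤ √G := by
      apply Real.le_sqrt_of_sq_le
      rw [hG, GG]; nlinarith [sq_nonneg ‖v‖, sq_nonneg ‖γ • x + v‖]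
    have hx : ‖x‖ ≤ 2 * √G := by
      have e : γ • x = (γ • x + v) - v := by abel
      have h2 : ‖γ • x‖ ≤ ‖γ • x + v‖ + ‖v‖ := by
        conv_lhs => rw [e]
        exact norm_sub_le _ _
      rw [norm_smul, Real.norm_of_nonneg hγ0.le] at h2
      nlinarith [norm_nonneg x]
    have hb' : ‖h • b‖ ≤ 3 * C₁ * √G := by
      rw [norm_smul, Real.norm_of_nonneg hh.le]
      calc h * ‖b‖ ≤ 1 * (C₁ * (√G + 2 * √G)) := by gcongr; exact hb.trans (by gcongr)
        _ = _ := by ring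
    have hvv : ‖(γ * h) • v‖ ≤ γ * √G := by
      rw [norm_smul, Real.norm_of_nonneg (by positivity)]
      calc γ * h * ‖v‖ ≤ γ * 1 * √G := by gcongr
        _ = _ := by ring
    have hac : ‖a + c‖ ≤ (4 + 6 * C₁ + γ) * √G := by
      have n1 := norm_add_le a c
      have n2 := norm_sub_le (γ • x + v) (h • b)
      have n3 := norm_sub_le (v - h • b) ((γ * h) • v)
      have n4 := norm_sub_le v (h • b)
      rw [← ha] at n2
      rw [← hc] at n3
      linarith
    rw [norm_smul, Real.norm_of_nonneg (by positivity), hs']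
    calc 2 * (√(2 * γ) * √h) * ‖a + c‖ ≤ 2 * (√(2 * γ) * √h) * ((4 + 6 * C₁ + γ) * √G) := by gcongr
      _ = _ := by ring
  · intro ξ
    have e1 : γ • (x + h • v) + (c + s • ξ) = a + s • ξ := by
      rw [ha, hc, smul_add, smul_smul]; abel
    have e2 : GG γ (x + h • v) (c + s • ξ) =
        1 + ‖a‖ ^ 2 + ‖c‖ ^ 2 + ⟪(2 * s) • (a + c), ξ⟫ + 2 * s ^ 2 * ‖ξ‖ ^ 2 := by
      rw [GG, e1, norm_add_sq_real, norm_add_sq_real, inner_smul_right, inner_smul_right,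
        norm_smul, real_inner_smul_left, inner_add_left, mul_pow, Real.norm_eq_abs, sq_abs]
      ring
    have ea : ‖a‖ ^ 2 = ‖γ • x + v‖ ^ 2 - 2 * h * (γ * ⟪x, b⟫ + ⟪v, b⟫) + h ^ 2 * ‖b‖ ^ 2 := by
      rw [ha, norm_sub_sq_real, inner_smul_right, inner_add_left, real_inner_smul_left, norm_smul,
        mul_pow, Real.norm_eq_abs, sq_abs]
      ring
    have ec : ‖c‖ ^ 2 = ‖v‖ ^ 2 - 2 * h * (⟪v, b⟫ + γ * ‖v‖ ^ 2) + h ^ 2 * ‖b + γ • v‖ ^ 2 := by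
      have : c = v - h • (b + γ • v) := by rw [hc, smul_add, smul_smul, mul_comm h γ]; abel
      rw [this, norm_sub_sq_real, inner_smul_right, inner_add_right, real_inner_smul_right, norm_smul,
        mul_pow, Real.norm_eq_abs, sq_abs, real_inner_self_eq_norm_sq]
      ring
    rw [e2, ea, ec, hss]
    set X := ‖x‖
    set Y := ‖v‖
    have hX : 0 ≤ X := norm_nonneg _
    have hY : 0 ≤ Y := norm_nonneg _
    have hvb : |⟪v, b⟫| ≤ Y * (C₁ * (1 + X)) :=
      (abs_real_inner_le_norm v b).trans (by gcongr)
    have hvb' : -⟪v, b⟫ ≤ Y * (C₁ * (1 + X)) := (neg_le_abs _).trans hvb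
    have hbb : ‖b‖ ^ 2 ≤ 2 * C₁ ^ 2 * (1 + X ^ 2) := by
      calc ‖b‖ ^ 2 ≤ (C₁ * (1 + X)) ^ 2 := by gcongr
        _ ≤ _ := by nlinarith [mul_nonneg (sq_nonneg C₁) (sq_nonneg (1 - X))]
    have hbv : ‖b + γ • v‖ ^ 2 ≤ 2 * ‖b‖ ^ 2 + 2 * γ ^ 2 * Y ^ 2 := by
      have h1 : ‖b + γ • v‖ ≤ ‖b‖ + γ * Y := by
        refine (norm_add_le _ _).trans ?_
        rw [norm_smul, Real.norm_of_nonneg hγ0.le]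
      calc ‖b + γ • v‖ ^ 2 ≤ (‖b‖ + γ * Y) ^ 2 := by gcongr
        _ ≤ _ := by nlinarith [sq_nonneg (‖b‖ - γ * Y)]
    have hcross : 4 * C₁ * Y * X ≤ γ * m / 2 * X ^ 2 + γ / 2 * Y ^ 2 := by
      have h1 : (4 * C₁ * Y * X) * (4 * γ * m) ≤ (γ * m / 2 * X ^ 2 + γ / 2 * Y ^ 2) * (4 * γ * m) := by
        nlinarith [sq_nonneg (γ * m * X - 4 * C₁ * Y), mul_nonneg (sub_nonneg.2 hγ) (mul_nonneg hm.le (sq_nonneg Y)),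
          mul_nonneg (sub_nonneg.2 hγ) (sq_nonneg Y)]
      exact le_of_mul_le_mul_right h1 (by positivity)
    have hlin : 4 * C₁ * Y ≤ γ / 2 * Y ^ 2 + 8 * C₁ ^ 2 := by
      nlinarith [sq_nonneg (Y - 4 * C₁), mul_nonneg (sub_nonneg.2 hγ1) (sq_nonneg Y)]
    have hGle : l * (1 + ‖γ • x + v‖ ^ 2 + Y ^ 2) ≤ l + γ * m * X ^ 2 + γ / 2 * Y ^ 2 := by
      have h1 : ‖γ • x + v‖ ≤ γ * X + Y := by
        refine (norm_add_le _ _).trans ?_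
        rw [norm_smul, Real.norm_of_nonneg hγ0.le]
      have h2 : ‖γ • x + v‖ ^ 2 ≤ 2 * γ ^ 2 * X ^ 2 + 2 * Y ^ 2 := by
        calc ‖γ • x + v‖ ^ 2 ≤ (γ * X + Y) ^ 2 := by gcongr
          _ ≤ _ := by nlinarith [sq_nonneg (γ * X - Y)]
      have h3 := mul_le_mul_of_nonneg_left h2 hl0.le
      have h4 := mul_le_mul_of_nonneg_right hl1 (show 0 ≤ γ * X ^ 2 by positivity)
      have h5 := mul_le_mul_of_nonneg_right hl2 (sq_nonneg Y)
      linarith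
    have hD : -2 * γ * ⟪x, b⟫ - 4 * ⟪v, b⟫ - 2 * γ * Y ^ 2 + h * (‖b‖ ^ 2 + ‖b + γ • v‖ ^ 2)
        ≤ -(γ * m * X ^ 2) - γ / 2 * Y ^ 2 + K0 := by
      have h1 : h * (‖b‖ ^ 2 + ‖b + γ • v‖ ^ 2) ≤ h * (6 * C₁ ^ 2 * (1 + X ^ 2) + 2 * γ ^ 2 * Y ^ 2) :=
        mul_le_mul_of_nonneg_left (by linarith) hh.le
      have h2 := mul_le_mul_of_nonneg_right hh2 (sq_nonneg X)
      have h3 := mul_le_mul_of_nonneg_right hh3 (show 0 ≤ γ * Y ^ 2 by positivity)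
      have h4 := mul_le_mul_of_nonneg_left hxb hγ0.le
      have h5 := mul_le_mul_of_nonneg_right hh1 (sq_nonneg C₁)
      rw [hK0]
      linarith
    have hξ : 0 ≤ ‖ξ‖ := norm_nonneg ξ
    have hKξ : K0 + l + 4 * γ * ‖ξ‖ ^ 2 ≤ (K0 + l + 4 * γ) * (1 + ‖ξ‖) ^ 2 := by
      have hk : 0 ≤ K0 + l := by positivity
      have e : (1 + ‖ξ‖) ^ 2 = 1 + 2 * ‖ξ‖ + ‖ξ‖ ^ 2 := by ring
      rw [e]
      linarith [mul_nonneg hk hξ, mul_nonneg hk (sq_nonneg ‖ξ‖), mul_nonneg hγ0.le hξ]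
    have h6 := mul_le_mul_of_nonneg_left hD hh.le
    have h7 := mul_le_mul_of_nonneg_left hKξ hh.le
    have h8 := mul_le_mul_of_nonneg_left hGle hh.le
    rw [GG]
    linarith

lemma aux_equiv {E : Type*} [NormedAddCommGroup E] [InnerProductSpace ℝ E]
    (γ : ℝ) (hγ1 : 1 ≤ γ) (r : ℝ) (hr : 1 ≤ r) (x v : E) :
    GG γ x v ^ r ≤ (3 + 2 * γ ^ 2) ^ r * (‖x‖ + ‖v‖ + 1) ^ (2 * r) ∧
    (‖x‖ + ‖v‖ + 1) ^ (2 * r) ≤ 9 ^ r * GG γ x v ^ r := by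
  have hγ0 : 0 < γ := by linarith
  have hr0 : 0 ≤ r := by linarith
  have hx := norm_nonneg x
  have hv := norm_nonneg v
  have hG : 1 ≤ GG γ x v := by rw [GG]; nlinarith [sq_nonneg ‖v‖, sq_nonneg ‖γ • x + v‖]
  have e : (‖x‖ + ‖v‖ + 1) ^ (2 * r) = ((‖x‖ + ‖v‖ + 1) ^ 2) ^ r := by
    rw [Real.rpow_mul (by positivity)]; norm_num
  have h1 : ‖γ • x + v‖ ≤ γ * ‖x‖ + ‖v‖ := by
    refine (norm_add_le _ _).trans ?_
    rw [norm_smul, Real.norm_of_nonneg hγ0.le]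
  have h2 : γ * ‖x‖ ≤ ‖γ • x + v‖ + ‖v‖ := by
    have := norm_sub_le (γ • x + v) v
    rwa [add_sub_cancel_right, norm_smul, Real.norm_of_nonneg hγ0.le] at this
  rw [e, ← Real.mul_rpow (by positivity) (by positivity),
    ← Real.mul_rpow (by positivity) (by linarith)]
  constructor
  · apply Real.rpow_le_rpow (by linarith) _ hr0
    have h3 : ‖γ • x + v‖ ^ 2 ≤ (γ * ‖x‖ + ‖v‖) ^ 2 := by gcongr
    have h4 : (γ * ‖x‖ + ‖v‖) ^ 2 ≤ 2 * γ ^ 2 * ‖x‖ ^ 2 + 2 * ‖v‖ ^ 2 := by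
      linarith [sq_nonneg (γ * ‖x‖ - ‖v‖)]
    have h5 : 1 + ‖x‖ ^ 2 + ‖v‖ ^ 2 ≤ (‖x‖ + ‖v‖ + 1) ^ 2 := by
      linarith [mul_nonneg hx hv]
    have h6 := mul_le_mul_of_nonneg_left h5 (show 0 ≤ 3 + 2 * γ ^ 2 by positivity)
    have h7 : 0 ≤ γ ^ 2 * ‖v‖ ^ 2 := by positivity
    have h8 : 0 ≤ γ ^ 2 := by positivity
    rw [GG]
    linarith [sq_nonneg ‖x‖]
  · apply Real.rpow_le_rpow (by positivity) _ hr0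
    have h3 : ‖x‖ ≤ ‖γ • x + v‖ + ‖v‖ := le_trans (le_mul_of_one_le_left hx hγ1) h2
    have h4 : ‖x‖ ^ 2 ≤ (‖γ • x + v‖ + ‖v‖) ^ 2 := by gcongr
    rw [GG]
    linarith [sq_nonneg (‖γ • x + v‖ - ‖v‖), sq_nonneg (‖x‖ - ‖v‖), sq_nonneg (‖x‖ - 1),
      sq_nonneg (‖v‖ - 1), sq_nonneg ‖γ • x + v‖]

lemma aux_iter (a : ℕ → ℝ≥0∞) (α K4 h : ℝ) (hα : 0 < α) (hK4 : 0 ≤ K4) (hh : 0 < h)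
    (hαh : α * h ≤ 1) (h0 : 1 ≤ a 0)
    (hstep : ∀ n, a (n + 1) ≤ ENNReal.ofReal (1 - α * h) * a n + ENNReal.ofReal (K4 * h)) (n : ℕ) :
    a n ≤ ENNReal.ofReal (1 + K4 / α) * a 0 := by
  have hd : 0 ≤ K4 / α := by positivity
  induction n with
  | zero =>
    refine le_mul_of_one_le_left (zero_le) ?_
    rw [← ENNReal.ofReal_one]
    exact ENNReal.ofReal_le_ofReal (by linarith)
  | succ n ih =>
    calc a (n + 1) ≤ ENNReal.ofReal (1 - α * h) * a n + ENNReal.ofReal (K4 * h) := hstep n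
      _ ≤ ENNReal.ofReal (1 - α * h) * (ENNReal.ofReal (1 + K4 / α) * a 0)
          + ENNReal.ofReal (K4 * h) * a 0 := by
          gcongr
          exact le_mul_of_one_le_right (zero_le) h0
      _ = ENNReal.ofReal ((1 - α * h) * (1 + K4 / α) + K4 * h) * a 0 := by
          rw [ENNReal.ofReal_add (mul_nonneg (by linarith) (by linarith)) (by positivity),
            ENNReal.ofReal_mul (p := 1 - α * h) (by linarith)]
          ring
      _ ≤ _ := by
          refine mul_le_mul_left (ENNReal.ofReal_le_ofReal ?_) _
          have e : (1 - α * h) * (1 + K4 / α) + K4 * h = 1 + K4 / α - α * h := by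
            field_simp
            ring
          rw [e]
          linarith [mul_pos hα hh]

lemma aux_indep {E Ω Ω' : Type} [MeasurableSpace E] [NormedAddCommGroup E] [NormedSpace ℝ E]
    [BorelSpace E] [SecondCountableTopology E]
    [MeasurableSpace Ω'] [mΩ : MeasurableSpace Ω] (P : Measure Ω) [IsProbabilityMeasure P]
    (b : E → Ω' → E) (hb : Measurable (Function.uncurry b)) (γ h s : ℝ)
    (X V ξ : ℕ → Ω → E) (w : ℕ → Ω → Ω')
    (hX0 : Measurable (X 0)) (hV0 : Measurable (V 0))
    (hξ : ∀ n, Measurable (ξ n)) (hw : ∀ n, Measurable (w n))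
    (hind : iIndep (fun i : Option (ℕ ⊕ ℕ) =>
          Option.elim i (MeasurableSpace.comap (fun ω => (X 0 ω, V 0 ω)) inferInstance)
            (Sum.elim (fun n => MeasurableSpace.comap (ξ n) inferInstance)
              fun n => MeasurableSpace.comap (w n) inferInstance)) P)
    (hX : ∀ n ω, X (n + 1) ω = X n ω + h • V n ω)
    (hV : ∀ n ω, V (n + 1) ω = V n ω - h • b (X n ω) (w n ω) - (γ * h) • V n ω + s • ξ n ω)
    (n : ℕ) : Measurable (fun ω => ((X n ω, V n ω), w n ω)) ∧
      IndepFun (fun ω => ((X n ω, V n ω), w n ω)) (ξ n) P := by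
  set mm : Option (ℕ ⊕ ℕ) → MeasurableSpace Ω := fun i =>
          Option.elim i (MeasurableSpace.comap (fun ω => (X 0 ω, V 0 ω)) inferInstance)
            (Sum.elim (fun n => MeasurableSpace.comap (ξ n) inferInstance)
              fun n => MeasurableSpace.comap (w n) inferInstance) with hmm
  have hle : ∀ i, mm i ≤ mΩ := by
    rintro (_ | n | n)
    · exact (hX0.prodMk hV0).comap_le
    · exact (hξ n).comap_le
    · exact (hw n).comap_le
  let T : ℕ → Set (Option (ℕ ⊕ ℕ)) := fun n => {i | ∀ j, n ≤ j → i ≠ some (Sum.inl j)}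
  let F : ℕ → MeasurableSpace Ω := fun n => ⨆ i ∈ T n, mm i
  have hF : ∀ n i, i ∈ T n → mm i ≤ F n := fun n i hi => le_iSup₂ (f := fun i (_ : i ∈ T n) => mm i) i hi
  have hmono : ∀ n, F n ≤ F (n + 1) := fun n =>
    biSup_mono fun i hi j hj => hi j (by omega)
  have hwF : ∀ n, Measurable[F n] (w n) := fun n =>
    (comap_measurable (w n)).mono (hF n (some (Sum.inr n)) (by intro j _; simp)) le_rfl
  have hξF : ∀ n, Measurable[F (n+1)] (ξ n) := fun n =>
    (comap_measurable (ξ n)).mono (hF (n+1) (some (Sum.inl n)) (by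
      intro j hj; simp; omega)) le_rfl
  have hXV : ∀ n, Measurable[F n] (X n) ∧ Measurable[F n] (V n) := by
    intro n
    induction n with
    | zero =>
      have h1 : Measurable[F 0] (fun ω => (X 0 ω, V 0 ω)) :=
        (comap_measurable (fun ω => (X 0 ω, V 0 ω))).mono (hF 0 none (by intro j _; simp)) le_rfl
      exact ⟨measurable_fst.comp h1, measurable_snd.comp h1⟩
    | succ n ih =>
      have hx := ih.1.mono (hmono n) le_rfl
      have hv := ih.2.mono (hmono n) le_rfl
      have hww := (hwF n).mono (hmono n) le_rfl
      have hbb : Measurable[F (n+1)] (fun ω => b (X n ω) (w n ω)) :=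
        hb.comp (Measurable.prodMk hx hww)
      constructor
      · rw [show X (n+1) = fun ω => X n ω + h • V n ω from funext (hX n)]
        exact Measurable.add hx (Measurable.const_smul hv h)
      · rw [show V (n+1) = fun ω => V n ω - h • b (X n ω) (w n ω) - (γ * h) • V n ω + s • ξ n ω
          from funext (hV n)]
        exact Measurable.add (Measurable.sub (Measurable.sub hv (Measurable.const_smul hbb h))
          (Measurable.const_smul hv _)) (Measurable.const_smul (hξF n) s)
  have hZ : Measurable[F n] (fun ω => ((X n ω, V n ω), w n ω)) :=
    Measurable.prodMk (Measurable.prodMk (hXV n).1 (hXV n).2) (hwF n)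
  have hFle : F n ≤ mΩ := iSup₂_le fun i _ => hle i
  refine ⟨hZ.mono hFle le_rfl, ?_⟩
  rw [IndepFun_iff_Indep]
  have hdisj : Disjoint (T n) {some (Sum.inl n)} := by
    rw [Set.disjoint_singleton_right]
    intro hmem
    exact hmem n le_rfl rfl
  have := indep_iSup_of_disjoint hle hind hdisj
  refine indep_of_indep_of_le_left (indep_of_indep_of_le_right this ?_) hZ.comap_le
  exact le_iSup₂ (f := fun i (_ : i ∈ ({some (Sum.inl n)} : Set (Option (ℕ ⊕ ℕ)))) => mm i)
    (some (Sum.inl n)) rfl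

set_option maxHeartbeats 2000000 in
/-- uniform-in-time `2r`-th moment bound for the stochastic gradient
Euler–Maruyama chain for the underdamped Langevin dynamics, under A1, A2 and A4. -/
theorem statement14 (d : ℕ) (hd : 1 ≤ d) (U : EuclideanSpace ℝ (Fin d) → ℝ)
    (C₀ C₁ m R : ℝ) (hC₀ : 0 < C₀) (hC₁ : 0 < C₁) (hm : 0 < m) (hR : 0 < R)
    -- A1
    (hU : ContDiff ℝ 3 U)
    (hU0 : ∀ x, |U x| ≤ C₁ * (‖x‖ + 1) ^ 2)
    (hU1 : ∀ x, ‖gradient U x‖ ≤ C₁ * (‖x‖ + 1))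
    (hU2 : ∀ x, ‖iteratedFDeriv ℝ 2 U x‖ ≤ C₁)
    (hU3 : ∀ x, ‖iteratedFDeriv ℝ 3 U x‖ ≤ C₁)
    -- A2
    (hconv : ∀ x, R ≤ ‖x‖ → ∀ y, m * ‖y‖ ^ 2 ≤ iteratedFDeriv ℝ 2 U x ![y, y])
    -- A4: the stochastic gradient b on a probability space (Ω', 𝒢, μ)
    (Ω' : Type) (𝒢 : MeasurableSpace Ω') (μ : Measure Ω') (hμ : IsProbabilityMeasure μ)
    (b : EuclideanSpace ℝ (Fin d) → Ω' → EuclideanSpace ℝ (Fin d))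
    (hbmeas : Measurable (Function.uncurry b))
    (hbgrowth : ∀ x ω', ‖b x ω'‖ ≤ C₁ * (1 + ‖x‖))
    (hbdiff : ∀ ω', Differentiable ℝ (fun y => b y ω'))
    (hbderiv : ∀ x ω', ‖fderiv ℝ (fun y => b y ω') x‖ ≤ C₁)
    (hbdrift : ∀ x ω', m * ‖x‖ ^ 2 - C₀ ≤ ⟪x, b x ω'⟫)
    (hbunbiased : ∀ x, (∫ ω', b x ω' ∂μ) = gradient U x)
    (r : ℝ) (hr : 1 ≤ r) :
    ∃ γ₀ > (0 : ℝ), ∀ γ ≥ γ₀, ∃ C > (0 : ℝ), ∃ h₀ > (0 : ℝ), ∀ h : ℝ, 0 < h → h ≤ h₀ →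
      ∀ (Ω : Type) (_ : MeasurableSpace Ω) (P : Measure Ω), IsProbabilityMeasure P →
      ∀ (X V ξ : ℕ → Ω → EuclideanSpace ℝ (Fin d)) (w : ℕ → Ω → Ω'),
        Measurable (X 0) → Measurable (V 0) →
        (∀ n, Measurable (ξ n)) → (∀ n, Measurable (w n)) →
        -- each ξ_n is a standard Gaussian random vector in ℝ^d
        (∀ n, Measure.map (fun ω i => ξ n ω i) P =
          Measure.pi fun _ : Fin d => gaussianReal 0 1) →
        -- each ω_n has law μ
        (∀ n, Measure.map (w n) P = μ) →
        -- (X₀,V₀), ξ₀, ξ₁, …, ω₀, ω₁, … are mutually independent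
        iIndep (fun i : Option (ℕ ⊕ ℕ) =>
          Option.elim i (MeasurableSpace.comap (fun ω => (X 0 ω, V 0 ω)) inferInstance)
            (Sum.elim (fun n => MeasurableSpace.comap (ξ n) inferInstance)
              fun n => MeasurableSpace.comap (w n) inferInstance)) P →
        -- stochastic gradient Euler–Maruyama recursion
        (∀ n ω, X (n + 1) ω = X n ω + h • V n ω) →
        (∀ n ω, V (n + 1) ω = V n ω - h • b (X n ω) (w n ω) - (γ * h) • V n ω
            + Real.sqrt (2 * γ * h) • ξ n ω) →
        -- finite initial moment
        (∫⁻ ω, ENNReal.ofReal ((‖X 0 ω‖ + ‖V 0 ω‖ + 1) ^ (2 * r)) ∂P) < ∞ →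
        ∀ n, (∫⁻ ω, ENNReal.ofReal ((‖X n ω‖ + ‖V n ω‖ + 1) ^ (2 * r)) ∂P) ≤
          ENNReal.ofReal C *
            ∫⁻ ω, ENNReal.ofReal ((‖X 0 ω‖ + ‖V 0 ω‖ + 1) ^ (2 * r)) ∂P := by
  have hdr : 0 < 16 * C₁ ^ 2 / m := by positivity
  refine ⟨1 + 16 * C₁ ^ 2 / m, by positivity, fun γ hγ => ?_⟩
  have hγ1 : 1 ≤ γ := by linarith
  have hγ2 : 16 * C₁ ^ 2 ≤ m * γ ^ 2 := by
    have h1 : 16 * C₁ ^ 2 / m ≤ γ := by linarith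
    rw [div_le_iff₀ hm] at h1
    nlinarith
  obtain ⟨l, hl, K, hK, Cp, hCp, h₁, hh₁, hdrift⟩ :=
    aux_drift (E := EuclideanSpace ℝ (Fin d)) C₀ C₁ m γ hC₀ hC₁ hm hγ1 hγ2
  set ν := stdGaussian (EuclideanSpace ℝ (Fin d)) with hν
  have hmemLp : ∀ N : ℕ, MemLp (fun ξ : EuclideanSpace ℝ (Fin d) => 1 + ‖ξ‖) (N : ℝ≥0∞) ν := by
    intro N
    exact (memLp_const (1:ℝ)).add (IsGaussian.memLp_id ν N (by simp)).norm
  have hmom : ∀ N : ℕ, Integrable (fun ξ : EuclideanSpace ℝ (Fin d) => (1 + ‖ξ‖) ^ N) ν := by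
    intro N
    have := (hmemLp N).integrable_norm_pow'
    refine this.congr (Filter.Eventually.of_forall fun ξ => ?_)
    simp only [Real.norm_of_nonneg (show 0 ≤ 1 + ‖ξ‖ by positivity)]
  have hint : ∀ p : EuclideanSpace ℝ (Fin d),
      Integrable (fun ξ : EuclideanSpace ℝ (Fin d) => ⟪p, ξ⟫) ν := by
    intro p
    have h1 : Integrable (id : EuclideanSpace ℝ (Fin d) → _) ν :=
      memLp_one_iff_integrable.1 (IsGaussian.memLp_id ν 1 (by simp))
    exact h1.const_inner p
  have hmean : ∀ p : EuclideanSpace ℝ (Fin d), ∫ ξ, ⟪p, ξ⟫ ∂ν = 0 := by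
    intro p
    exact integral_strongDual_stdGaussian (innerSL ℝ p)
  obtain ⟨α, hα, K4, hK4, h₂, hh₂, hstep⟩ := aux_step ν hmom hint hmean r hr l K Cp hl hK hCp
  refine ⟨9 ^ r * (1 + K4 / α) * (3 + 2 * γ ^ 2) ^ r, by positivity, min h₁ h₂, by positivity, ?_⟩
  intro h hh hle Ω mΩ P hP X V ξ w hX0 hV0 hξ hw hξlaw hwlaw hind hX hV hfin n
  obtain ⟨hαh, hstep⟩ := hstep h hh (hle.trans (min_le_right _ _))
  have hdrift := hdrift h hh (hle.trans (min_le_left _ _))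
  have hGG1 : ∀ x v : EuclideanSpace ℝ (Fin d), 1 ≤ GG γ x v := by
    intro x v; rw [GG]; nlinarith [sq_nonneg ‖v‖, sq_nonneg ‖γ • x + v‖]
  have hGGm : Measurable (fun p : EuclideanSpace ℝ (Fin d) × EuclideanSpace ℝ (Fin d) =>
      GG γ p.1 p.2) := by
    unfold GG; fun_prop
  have hlaw : ∀ n, Measure.map (ξ n) P = ν := by
    intro n
    rw [hν, ← map_pi_eq_stdGaussian, ← hξlaw n, Measure.map_map (by fun_prop) (by fun_prop)]
    rfl
  have hind' := aux_indep P b hbmeas γ h (√(2 * γ * h)) X V ξ w hX0 hV0 hξ hw hind hX hV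
  have hmain := aux_iter (fun n => ∫⁻ ω, ENNReal.ofReal (GG γ (X n ω) (V n ω) ^ r) ∂P) α K4 h hα hK4
    hh hαh (by
      calc (1 : ℝ≥0∞) = ∫⁻ _, 1 ∂P := by simp
        _ ≤ _ := by
          apply lintegral_mono
          intro ω
          simp only
          rw [← ENNReal.ofReal_one]
          exact ENNReal.ofReal_le_ofReal (Real.one_le_rpow (hGG1 _ _) (by linarith))) (by
      intro n
      obtain ⟨hZ, hI⟩ := hind' n
      let Φ : ((EuclideanSpace ℝ (Fin d) × EuclideanSpace ℝ (Fin d)) × Ω') × EuclideanSpace ℝ (Fin d)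
        → ℝ≥0∞ := fun q => ENNReal.ofReal (GG γ (q.1.1.1 + h • q.1.1.2)
          (q.1.1.2 - h • b q.1.1.1 q.1.2 - (γ * h) • q.1.1.2 + √(2 * γ * h) • q.2) ^ r)
      have hbm : Measurable (fun q : ((EuclideanSpace ℝ (Fin d) × EuclideanSpace ℝ (Fin d)) × Ω')
          × EuclideanSpace ℝ (Fin d) => b q.1.1.1 q.1.2) :=
        hbmeas.comp (g := Function.uncurry b) (f := fun q : ((EuclideanSpace ℝ (Fin d) ×
          EuclideanSpace ℝ (Fin d)) × Ω') × EuclideanSpace ℝ (Fin d) => (q.1.1.1, q.1.2)) (by fun_prop)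
      have hΦ : Measurable Φ := by
        have hx : Measurable (fun q : ((EuclideanSpace ℝ (Fin d) × EuclideanSpace ℝ (Fin d)) × Ω')
          × EuclideanSpace ℝ (Fin d) => q.1.1.1) := by fun_prop
        have hv : Measurable (fun q : ((EuclideanSpace ℝ (Fin d) × EuclideanSpace ℝ (Fin d)) × Ω')
          × EuclideanSpace ℝ (Fin d) => q.1.1.2) := by fun_prop
        have hy : Measurable (fun q : ((EuclideanSpace ℝ (Fin d) × EuclideanSpace ℝ (Fin d)) × Ω')
          × EuclideanSpace ℝ (Fin d) => q.2) := by fun_prop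
        have hx' := hx.add (hv.const_smul h)
        have hv' := ((hv.sub (hbm.const_smul h)).sub (hv.const_smul (γ * h))).add
          (hy.const_smul (√(2 * γ * h)))
        exact ((hGGm.comp (hx'.prodMk hv')).pow_const r).ennreal_ofReal
      have hprod := (indepFun_iff_map_prod_eq_prod_map_map hZ.aemeasurable (hξ n).aemeasurable).1 hI
      have hprobZ : IsProbabilityMeasure (P.map fun ω => ((X n ω, V n ω), w n ω)) :=
        Measure.isProbabilityMeasure_map hZ.aemeasurable
      calc ∫⁻ ω, ENNReal.ofReal (GG γ (X (n+1) ω) (V (n+1) ω) ^ r) ∂P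
          = ∫⁻ ω, Φ (((X n ω, V n ω), w n ω), ξ n ω) ∂P := by
            apply lintegral_congr
            intro ω
            simp only [Φ, hX, hV]
        _ = ∫⁻ q, Φ q ∂(P.map fun ω => (((X n ω, V n ω), w n ω), ξ n ω)) := by
            rw [lintegral_map hΦ (hZ.prodMk (hξ n))]
        _ = ∫⁻ z, ∫⁻ y, Φ (z, y) ∂ν ∂(P.map fun ω => ((X n ω, V n ω), w n ω)) := by
            rw [hprod, hlaw, lintegral_prod _ hΦ.aemeasurable]
        _ = ∫⁻ ω, ∫⁻ y, Φ (((X n ω, V n ω), w n ω), y) ∂ν ∂P := by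
            rw [lintegral_map hΦ.lintegral_prod_right' hZ]
        _ ≤ ∫⁻ ω, ENNReal.ofReal ((1 - α * h) * GG γ (X n ω) (V n ω) ^ r + K4 * h) ∂P := by
            apply lintegral_mono
            intro ω
            obtain ⟨p, hp, hpb⟩ := hdrift (X n ω) (V n ω) (b (X n ω) (w n ω))
              (hbgrowth _ _) (hbdrift _ _)
            exact hstep (GG γ (X n ω) (V n ω)) p _ (hGG1 _ _) hp
              (fun y => zero_le_one.trans (hGG1 _ _)) hpb
        _ = ∫⁻ ω, (ENNReal.ofReal (1 - α * h) * ENNReal.ofReal (GG γ (X n ω) (V n ω) ^ r)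
              + ENNReal.ofReal (K4 * h)) ∂P := by
            apply lintegral_congr
            intro ω
            have h0 : 0 ≤ GG γ (X n ω) (V n ω) ^ r :=
              Real.rpow_nonneg (zero_le_one.trans (hGG1 _ _)) r
            rw [ENNReal.ofReal_add (mul_nonneg (by linarith) h0) (by positivity),
              ENNReal.ofReal_mul (by linarith)]
        _ = _ := by
            rw [lintegral_add_right _ measurable_const, lintegral_const_mul' _ _ ENNReal.ofReal_ne_top]
            simp) n
  calc ∫⁻ ω, ENNReal.ofReal ((‖X n ω‖ + ‖V n ω‖ + 1) ^ (2 * r)) ∂P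
      ≤ ∫⁻ ω, ENNReal.ofReal (9 ^ r) * ENNReal.ofReal (GG γ (X n ω) (V n ω) ^ r) ∂P := by
        apply lintegral_mono
        intro ω
        simp only
        rw [← ENNReal.ofReal_mul (by positivity)]
        exact ENNReal.ofReal_le_ofReal (aux_equiv γ hγ1 r hr _ _).2
    _ = ENNReal.ofReal (9 ^ r) * ∫⁻ ω, ENNReal.ofReal (GG γ (X n ω) (V n ω) ^ r) ∂P :=
        lintegral_const_mul' _ _ ENNReal.ofReal_ne_top
    _ ≤ ENNReal.ofReal (9 ^ r) * (ENNReal.ofReal (1 + K4 / α) *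
          ∫⁻ ω, ENNReal.ofReal (GG γ (X 0 ω) (V 0 ω) ^ r) ∂P) := by gcongr
    _ ≤ ENNReal.ofReal (9 ^ r) * (ENNReal.ofReal (1 + K4 / α) *
          (ENNReal.ofReal ((3 + 2 * γ ^ 2) ^ r) *
          ∫⁻ ω, ENNReal.ofReal ((‖X 0 ω‖ + ‖V 0 ω‖ + 1) ^ (2 * r)) ∂P)) := by
        gcongr
        rw [← lintegral_const_mul' _ _ ENNReal.ofReal_ne_top]
        apply lintegral_mono
        intro ω
        simp only
        rw [← ENNReal.ofReal_mul (by positivity)]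
        exact ENNReal.ofReal_le_ofReal (aux_equiv γ hγ1 r hr _ _).1
    _ = ENNReal.ofReal (9 ^ r * (1 + K4 / α) * (3 + 2 * γ ^ 2) ^ r) *
          ∫⁻ ω, ENNReal.ofReal ((‖X 0 ω‖ + ‖V 0 ω‖ + 1) ^ (2 * r)) ∂P := by
        have n1 : (0:ℝ) ≤ 9 ^ r := by positivity
        have n2 : (0:ℝ) ≤ 9 ^ r * (1 + K4 / α) := by positivity
        rw [ENNReal.ofReal_mul n2, ENNReal.ofReal_mul n1, mul_assoc, mul_assoc]
end

section
/- Assume A1, A2 and A4. Consider the stochastic gradient Euler–Maruyama chain Z̃_n = (X̃_n,Ṽ_n) with time step h and damping rate γ, started from initial data with E(|X̃₀|+|Ṽ₀|+1)² < ∞. There exists γ₀ > 0 such that whenever γ ≥ γ₀, there exist constants C, h₀ > 0 depending on γ such that for every 0 < h ≤ h₀ and every integer N ≥ 1: E[|X̃_N − X̃₀|² + |Ṽ_N − Ṽ₀|²] ≤ C·N·h·E(|X̃₀|+|Ṽ₀|+1)². -/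
open MeasureTheory ProbabilityTheory RealInnerProductSpace
open scoped ENNReal

lemma drift_step {E : Type*} [NormedAddCommGroup E] [InnerProductSpace ℝ E]
    (C₀ C₁ m γ h c : ℝ) (hC₁ : 0 < C₁) (hm : 0 < m) (hγ1 : 1 ≤ γ)
    (hγ : 32 * C₁ ^ 2 ≤ γ ^ 2 * m) (h0 : 0 < h) (hh1 : γ * h ≤ 1 / 2)
    (hh2 : 8 * C₁ ^ 2 * h ≤ γ * m) (hc0 : 0 ≤ c) (hc1 : c * (2 * γ) ≤ m) (hc2 : 3 * c ≤ γ)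
    (x v B : E) (hB : ‖B‖ ≤ C₁ * (1 + ‖x‖)) (hd : m * ‖x‖ ^ 2 - C₀ ≤ ⟪x, B⟫) :
    ‖γ • x + v - h • B‖ ^ 2 + ‖(1 - γ * h) • v - h • B‖ ^ 2 ≤
      (1 - c * h) * (‖γ • x + v‖ ^ 2 + ‖v‖ ^ 2) + (2 * γ * C₀ + γ * m) * h := by
  have hvB : |⟪v, B⟫| ≤ ‖v‖ * ‖B‖ := abs_real_inner_le_norm v B
  have e1 : ‖γ • x + v - h • B‖ ^ 2 = ‖γ • x + v‖ ^ 2 - 2 * h * (γ * ⟪x, B⟫ + ⟪v, B⟫)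
      + h ^ 2 * ‖B‖ ^ 2 := by
    rw [norm_sub_sq_real, inner_smul_right, inner_add_left, real_inner_smul_left, norm_smul,
      mul_pow, Real.norm_eq_abs, sq_abs]
    ring
  have e2 : ‖(1 - γ * h) • v - h • B‖ ^ 2 = (1 - γ * h) ^ 2 * ‖v‖ ^ 2
      - 2 * h * (1 - γ * h) * ⟪v, B⟫ + h ^ 2 * ‖B‖ ^ 2 := by
    rw [norm_sub_sq_real, inner_smul_right, real_inner_smul_left, norm_smul, norm_smul,
      mul_pow, mul_pow, Real.norm_eq_abs, Real.norm_eq_abs, sq_abs, sq_abs]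
    ring
  have hL : ‖γ • x + v‖ ^ 2 ≤ 2 * γ ^ 2 * ‖x‖ ^ 2 + 2 * ‖v‖ ^ 2 := by
    have h1 : ‖γ • x + v‖ ≤ γ * ‖x‖ + ‖v‖ := by
      refine (norm_add_le _ _).trans ?_
      rw [norm_smul, Real.norm_eq_abs, abs_of_nonneg (by linarith)]
    have := pow_le_pow_left₀ (norm_nonneg _) h1 2
    nlinarith [sq_nonneg (γ * ‖x‖ - ‖v‖)]
  rw [e1, e2]
  set a := ‖x‖
  set s := ‖v‖
  set β := ‖B‖
  set L := ‖γ • x + v‖ ^ 2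
  set p := ⟪x, B⟫
  set q := ⟪v, B⟫
  have ha : 0 ≤ a := norm_nonneg _
  have hs : 0 ≤ s := norm_nonneg _
  have hβ : 0 ≤ β := norm_nonneg _
  have hγ0 : 0 < γ := by linarith
  have hβ2 : β ^ 2 ≤ 2 * C₁ ^ 2 * (1 + a ^ 2) := by
    have := pow_le_pow_left₀ hβ hB 2
    nlinarith [mul_nonneg (sq_nonneg C₁) (sq_nonneg (1 - a))]
  -- cross term
  have hcross : 4 * (s * β) ≤ γ / 2 * s ^ 2 + γ * m / 2 * (1 + a ^ 2) := by
    have h1 : 8 * β ^ 2 ≤ γ * (γ * m / 2 * (1 + a ^ 2)) := by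
      have : 32 * C₁ ^ 2 * (1 + a ^ 2) ≤ γ ^ 2 * m * (1 + a ^ 2) := by gcongr
      nlinarith
    have h2 : γ * (4 * (s * β)) ≤ γ * (γ / 2 * s ^ 2 + γ * m / 2 * (1 + a ^ 2)) := by
      nlinarith [sq_nonneg (γ * s - 4 * β)]
    exact le_of_mul_le_mul_left h2 hγ0
  have hq1 : -q ≤ s * β := by linarith [neg_abs_le q]
  have hq2 : -((1 - γ * h) * q) ≤ s * β := by
    have : (1 - γ * h) * (-q) ≤ 1 * (s * β) := by
      have h0' : 0 ≤ 1 - γ * h := by linarith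
      calc (1 - γ * h) * (-q) ≤ (1 - γ * h) * (s * β) := by gcongr
        _ ≤ 1 * (s * β) := by
          gcongr
          nlinarith
    linarith
  have hp : γ * (m * a ^ 2 - C₀) ≤ γ * p := by gcongr
  have hv2 : γ * (γ * h) * s ^ 2 ≤ γ * (1 / 2) * s ^ 2 := by gcongr
  have hb2 : 2 * h * β ^ 2 ≤ γ * m / 2 * (1 + a ^ 2) := by
    have h1 : 2 * h * β ^ 2 ≤ 2 * h * (2 * C₁ ^ 2 * (1 + a ^ 2)) := by gcongr
    have h2 : 8 * C₁ ^ 2 * h * (1 + a ^ 2) ≤ γ * m * (1 + a ^ 2) := by gcongr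
    linarith
  have hcL : c * (L + s ^ 2) ≤ γ * m * a ^ 2 + γ * s ^ 2 := by
    have h1 : c * (L + s ^ 2) ≤ c * (2 * γ ^ 2 * a ^ 2 + 3 * s ^ 2) := by
      refine mul_le_mul_of_nonneg_left ?_ hc0
      linarith
    have h2 : c * (2 * γ) * (γ * a ^ 2) ≤ m * (γ * a ^ 2) := by gcongr
    have h3 : 3 * c * s ^ 2 ≤ γ * s ^ 2 := by gcongr
    linarith
  have key : -2 * (γ * p + q) - 2 * γ * s ^ 2 + γ * (γ * h) * s ^ 2 - 2 * ((1 - γ * h) * q)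
      + 2 * h * β ^ 2 ≤ - (c * (L + s ^ 2)) + (2 * γ * C₀ + γ * m) := by
    linarith
  have := mul_le_mul_of_nonneg_left key h0.le
  linarith

section
variable {Ω : Type*} {mΩ : MeasurableSpace Ω} {P : Measure Ω}

lemma int_inner {E : Type*} [NormedAddCommGroup E] [InnerProductSpace ℝ E] {f g : Ω → E}
    (hf : MemLp f 2 P) (hg : MemLp g 2 P) : Integrable (fun ω => ⟪f ω, g ω⟫) P := by
  refine (hf.integrable_norm_pow (by norm_num) |>.add
    (hg.integrable_norm_pow (by norm_num))).mono' (hf.1.inner hg.1) (ae_of_all _ fun ω => ?_)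
  have := abs_real_inner_le_norm (f ω) (g ω)
  simp only [Real.norm_eq_abs, Pi.add_apply]
  nlinarith [sq_nonneg (‖f ω‖ - ‖g ω‖)]

lemma int_sq {E : Type*} [NormedAddCommGroup E] {f : Ω → E}
    (hf : MemLp f 2 P) : Integrable (fun ω => ‖f ω‖ ^ 2) P := by
  simpa using hf.integrable_norm_pow (by norm_num)

lemma inner_zero {d : ℕ} [IsProbabilityMeasure P] (G : MeasurableSpace Ω) (hG : G ≤ mΩ)
    (f ξ : Ω → EuclideanSpace ℝ (Fin d)) (hf : Measurable[G] f)
    (hf2 : MemLp f 2 P) (hξ2 : MemLp ξ 2 P)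
    (hind : Indep G (MeasurableSpace.comap ξ inferInstance) P)
    (h0 : ∀ i, ∫ ω, ξ ω i ∂P = 0) : ∫ ω, ⟪f ω, ξ ω⟫ ∂P = 0 := by
  have hfi : ∀ i, MemLp (fun ω => f ω i) 2 P := fun i => 
    hf2.continuousLinearMap_comp (EuclideanSpace.proj (𝕜 := ℝ) i)
  have hξi : ∀ i, MemLp (fun ω => ξ ω i) 2 P := fun i => 
    hξ2.continuousLinearMap_comp (EuclideanSpace.proj (𝕜 := ℝ) i)
  have hif : IndepFun f ξ P := by
    rw [IndepFun_iff_Indep]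
    exact indep_of_indep_of_le_left hind hf.comap_le
  have : ∀ ω, ⟪f ω, ξ ω⟫ = ∑ i, f ω i * ξ ω i := by
    intro ω
    simp [PiLp.inner_apply, mul_comm]
  simp_rw [this]
  rw [integral_finsetSum (f := fun i ω => f ω i * ξ ω i) _
    fun i _ => (hfi i).integrable_mul (hξi i)]
  refine Finset.sum_eq_zero fun i _ => ?_
  have h2 : IndepFun (fun ω => f ω i) (fun ω => ξ ω i) P :=
    hif.comp (φ := fun x : EuclideanSpace ℝ (Fin d) => x i)
      (ψ := fun x : EuclideanSpace ℝ (Fin d) => x i) (by fun_prop) (by fun_prop)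
  have := h2.integral_mul_eq_mul_integral (hfi i).1 (hξi i).1
  rw [h0 i, mul_zero] at this
  exact this

lemma gauss_facts {d : ℕ} (ξ : Ω → EuclideanSpace ℝ (Fin d)) (hξ : Measurable ξ)
    (hlaw : Measure.map (fun ω i => ξ ω i) P = Measure.pi fun _ : Fin d => gaussianReal 0 1) :
    MemLp ξ 2 P ∧ (∀ i, ∫ ω, ξ ω i ∂P = 0) ∧ ∫ ω, ‖ξ ω‖ ^ 2 ∂P = d := by
  have hm : ∀ i, Measure.map (fun ω => ξ ω i) P = gaussianReal 0 1 := by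
    intro i
    have h1 := (measurePreserving_eval (fun _ : Fin d => gaussianReal 0 1) i).map_eq
    rw [← hlaw, Measure.map_map (by fun_prop) (by fun_prop)] at h1
    exact h1
  have hmeas : ∀ i, Measurable (fun ω => ξ ω i) := fun i => by fun_prop
  have hL : ∀ i, MemLp (fun ω => ξ ω i) 2 P := by
    intro i
    have : MemLp id 2 (Measure.map (fun ω => ξ ω i) P) := by
      rw [hm i]; exact memLp_id_gaussianReal 2
    exact (memLp_map_measure_iff (by fun_prop) (hmeas i).aemeasurable).1 this
  have h0 : ∀ i, ∫ ω, ξ ω i ∂P = 0 := by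
    intro i
    have := integral_map (μ := P) (hmeas i).aemeasurable (f := id) (by fun_prop)
    rw [hm i] at this
    simpa using this.symm
  have h1 : ∀ i, ∫ ω, ξ ω i ^ 2 ∂P = 1 := by
    intro i
    have h := variance_id_gaussianReal (μ := 0) (v := 1)
    rw [← hm i, variance_map (by fun_prop) (hmeas i).aemeasurable] at h
    rw [variance_eq_integral (by fun_prop)] at h
    simpa [h0 i] using h
  have hn : ∀ ω, ‖ξ ω‖ ^ 2 = ∑ i, ξ ω i ^ 2 := fun ω => EuclideanSpace.real_norm_sq_eq _
  refine ⟨?_, h0, ?_⟩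
  · rw [memLp_two_iff_integrable_sq_norm hξ.aestronglyMeasurable]
    simp_rw [hn]
    exact integrable_finsetSum _ fun i _ => (hL i).integrable_sq
  · simp_rw [hn]
    rw [integral_finsetSum _ fun i _ => (hL i).integrable_sq]
    simp [h1]


lemma moment_bound {E : Type*} [NormedAddCommGroup E] [InnerProductSpace ℝ E]
    [IsProbabilityMeasure P] (d : ℕ)
    (C₀ C₁ m γ h c : ℝ) (hC₀ : 0 < C₀) (hC₁ : 0 < C₁) (hm : 0 < m) (hγ1 : 1 ≤ γ)
    (hγ : 32 * C₁ ^ 2 ≤ γ ^ 2 * m) (h0 : 0 < h) (hh1 : γ * h ≤ 1 / 2)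
    (hh2 : 8 * C₁ ^ 2 * h ≤ γ * m) (hc0 : 0 < c) (hc1 : c * (2 * γ) ≤ m) (hc2 : 3 * c ≤ γ)
    (X V B ξ : ℕ → Ω → E) (hB : ∀ n ω, ‖B n ω‖ ≤ C₁ * (1 + ‖X n ω‖))
    (hd : ∀ n ω, m * ‖X n ω‖ ^ 2 - C₀ ≤ ⟪X n ω, B n ω⟫)
    (hX2 : ∀ n, MemLp (X n) 2 P) (hV2 : ∀ n, MemLp (V n) 2 P) (hB2 : ∀ n, MemLp (B n) 2 P)
    (hξ2 : ∀ n, MemLp (ξ n) 2 P) (hξd : ∀ n, ∫ ω, ‖ξ n ω‖ ^ 2 ∂P = d)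
    (hXs : ∀ n ω, X (n + 1) ω = X n ω + h • V n ω)
    (hVs : ∀ n ω, V (n + 1) ω = V n ω - h • B n ω - (γ * h) • V n ω
            + Real.sqrt (2 * γ * h) • ξ n ω)
    (hoX : ∀ n, ∫ ω, ⟪X n ω, ξ n ω⟫ ∂P = 0) (hoV : ∀ n, ∫ ω, ⟪V n ω, ξ n ω⟫ ∂P = 0)
    (hoB : ∀ n, ∫ ω, ⟪B n ω, ξ n ω⟫ ∂P = 0) (n : ℕ) :
    ∫ ω, (‖γ • X n ω + V n ω‖ ^ 2 + ‖V n ω‖ ^ 2) ∂P ≤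
      ∫ ω, (‖γ • X 0 ω + V 0 ω‖ ^ 2 + ‖V 0 ω‖ ^ 2) ∂P
        + (2 * γ * C₀ + γ * m + 4 * γ * d) / c := by
  have hγ0 : 0 < γ := by linarith
  have hLint : ∀ n, Integrable (fun ω => ‖γ • X n ω + V n ω‖ ^ 2 + ‖V n ω‖ ^ 2) P := fun n =>
    (int_sq (((hX2 n).const_smul γ).add (hV2 n))).add (int_sq (hV2 n))
  set σ := Real.sqrt (2 * γ * h) with hσ
  have hσ2 : σ ^ 2 = 2 * γ * h := Real.sq_sqrt (by positivity)
  have step : ∀ n, ∫ ω, (‖γ • X (n+1) ω + V (n+1) ω‖ ^ 2 + ‖V (n+1) ω‖ ^ 2) ∂P ≤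
      (1 - c * h) * ∫ ω, (‖γ • X n ω + V n ω‖ ^ 2 + ‖V n ω‖ ^ 2) ∂P
        + (2 * γ * C₀ + γ * m + 4 * γ * d) * h := by
    intro n
    have hp : ∀ ω, ‖γ • X (n+1) ω + V (n+1) ω‖ ^ 2 + ‖V (n+1) ω‖ ^ 2 ≤
        (1 - c * h) * (‖γ • X n ω + V n ω‖ ^ 2 + ‖V n ω‖ ^ 2) + (2 * γ * C₀ + γ * m) * h
        + (2 * σ * γ) * ⟪X n ω, ξ n ω⟫ + (2 * σ * (2 - γ * h)) * ⟪V n ω, ξ n ω⟫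
        + (-(4 * σ * h)) * ⟪B n ω, ξ n ω⟫ + (4 * γ * h) * ‖ξ n ω‖ ^ 2 := by
      intro ω
      have hs := drift_step C₀ C₁ m γ h c hC₁ hm hγ1 hγ h0 hh1 hh2 hc0.le hc1 hc2
        (X n ω) (V n ω) (B n ω) (hB n ω) (hd n ω)
      have e1 : γ • X (n+1) ω + V (n+1) ω = (γ • X n ω + V n ω - h • B n ω) + σ • ξ n ω := by
        rw [hXs, hVs]; module
      have e2 : V (n+1) ω = ((1 - γ * h) • V n ω - h • B n ω) + σ • ξ n ω := by
        rw [hVs]; module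
      rw [e1, e2, norm_add_sq_real, norm_add_sq_real (_ - _)]
      simp only [inner_smul_right, inner_sub_left, inner_add_left, real_inner_smul_left, norm_smul,
        mul_pow, Real.norm_eq_abs, sq_abs, hσ2]
      linarith
    have i1 := (hLint n).const_mul (1 - c * h)
    have i2 : Integrable (fun _ : Ω => (2 * γ * C₀ + γ * m) * h) P := integrable_const _
    have i3 := (int_inner (hX2 n) (hξ2 n)).const_mul (2 * σ * γ)
    have i4 := (int_inner (hV2 n) (hξ2 n)).const_mul (2 * σ * (2 - γ * h))
    have i5 := (int_inner (hB2 n) (hξ2 n)).const_mul (-(4 * σ * h))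
    have i6 := (int_sq (hξ2 n)).const_mul (4 * γ * h)
    refine (integral_mono (hLint (n+1)) (((((i1.add i2).add i3).add i4).add i5).add i6) hp).trans ?_
    rw [integral_add' ((((i1.add i2).add i3).add i4).add i5) i6,
      integral_add' (((i1.add i2).add i3).add i4) i5, integral_add' ((i1.add i2).add i3) i4,
      integral_add' (i1.add i2) i3, integral_add' i1 i2]
    simp only [integral_const_mul, hoX, hoV, hoB, hξd, integral_const]
    simp only [probReal_univ, smul_eq_mul]
    linarith
  have hK : 0 ≤ 2 * γ * C₀ + γ * m + 4 * γ * d := by positivity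
  set K := 2 * γ * C₀ + γ * m + 4 * γ * d
  have hL0 : 0 ≤ ∫ ω, (‖γ • X 0 ω + V 0 ω‖ ^ 2 + ‖V 0 ω‖ ^ 2) ∂P :=
    integral_nonneg fun ω => by positivity
  have hch : c * h ≤ 1 := by nlinarith
  induction n with
  | zero => 
    have : 0 ≤ K / c := by positivity
    linarith
  | succ n ih =>
    refine (step n).trans ?_
    have h1 := mul_le_mul_of_nonneg_left ih (sub_nonneg.2 hch)
    have h2 : c * h * (K / c) = K * h := by field_simp
    have h3 : 0 ≤ c * h * ∫ ω, (‖γ • X 0 ω + V 0 ω‖ ^ 2 + ‖V 0 ω‖ ^ 2) ∂P := by positivity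
    linarith

lemma sum_bound {E : Type*} [NormedAddCommGroup E] [InnerProductSpace ℝ E]
    (f : ℕ → Ω → E) (hf : ∀ n, MemLp (f n) 2 P) (A : ℝ) (hA : ∀ n, ∫ ω, ‖f n ω‖ ^ 2 ∂P ≤ A)
    (N : ℕ) : ∫ ω, ‖∑ n ∈ Finset.range N, f n ω‖ ^ 2 ∂P ≤ N ^ 2 * A := by
  have h1 : ∀ ω, ‖∑ n ∈ Finset.range N, f n ω‖ ^ 2 ≤
      N * ∑ n ∈ Finset.range N, ‖f n ω‖ ^ 2 := by
    intro ω
    calc _ ≤ (∑ n ∈ Finset.range N, ‖f n ω‖) ^ 2 := by gcongr; exact norm_sum_le _ _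
      _ ≤ _ := by simpa using sq_sum_le_card_mul_sum_sq (s := Finset.range N) (f := fun n => ‖f n ω‖)
  have i1 : ∀ n ∈ Finset.range N, Integrable (fun ω => ‖f n ω‖ ^ 2) P := fun n _ => int_sq (hf n)
  have hS : MemLp (fun ω => ∑ n ∈ Finset.range N, f n ω) 2 P :=
    memLp_finsetSum _ fun n _ => hf n
  refine (integral_mono (int_sq hS)
    ((integrable_finsetSum _ i1).const_mul _) h1).trans ?_
  rw [integral_const_mul, integral_finsetSum _ i1]
  have : ∑ n ∈ Finset.range N, ∫ ω, ‖f n ω‖ ^ 2 ∂P ≤ N * A := by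
    simpa using Finset.sum_le_card_nsmul (Finset.range N) _ A fun n _ => hA n
  calc (N : ℝ) * ∑ n ∈ Finset.range N, ∫ ω, ‖f n ω‖ ^ 2 ∂P ≤ N * (N * A) :=
        mul_le_mul_of_nonneg_left this (Nat.cast_nonneg N)
    _ = N ^ 2 * A := by ring

lemma noise_bound {E : Type*} [NormedAddCommGroup E] [InnerProductSpace ℝ E]
    (d : ℕ) (ξ : ℕ → Ω → E) (hξ2 : ∀ n, MemLp (ξ n) 2 P) (hξd : ∀ n, ∫ ω, ‖ξ n ω‖ ^ 2 ∂P = d)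
    (ho : ∀ n, ∫ ω, ⟪∑ k ∈ Finset.range n, ξ k ω, ξ n ω⟫ ∂P = 0) (N : ℕ) :
    ∫ ω, ‖∑ n ∈ Finset.range N, ξ n ω‖ ^ 2 ∂P = N * d := by
  induction N with
  | zero => simp
  | succ n ih =>
    simp only [Finset.sum_range_succ, norm_add_sq_real]
    have hS : MemLp (fun ω => ∑ k ∈ Finset.range n, ξ k ω) 2 P := memLp_finsetSum _ fun n _ => hξ2 n
    have i1 := int_sq hS
    have i2 := (int_inner hS (hξ2 n)).const_mul 2
    have i3 : Integrable (fun ω => ‖∑ k ∈ Finset.range n, ξ k ω‖ ^ 2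
      + 2 * ⟪∑ k ∈ Finset.range n, ξ k ω, ξ n ω⟫) P := i1.add i2
    rw [integral_add i3 (int_sq (hξ2 n)), integral_add i1 i2, integral_const_mul, ho n, ih,
      hξd]
    push_cast
    ring


lemma diffusion {E : Type*} [NormedAddCommGroup E] [InnerProductSpace ℝ E]
    [IsProbabilityMeasure P] (d : ℕ)
    (C₀ C₁ m γ h c A D : ℝ) (hC₀ : 0 < C₀) (hC₁ : 0 < C₁) (hm : 0 < m) (hγ1 : 1 ≤ γ)
    (hγ : 32 * C₁ ^ 2 ≤ γ ^ 2 * m) (h0 : 0 < h) (hh1 : γ * h ≤ 1 / 2)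
    (hh2 : 8 * C₁ ^ 2 * h ≤ γ * m) (hc0 : 0 < c) (hc1 : c * (2 * γ) ≤ m) (hc2 : 3 * c ≤ γ)
    (hA : A = 2 * γ ^ 2 + 3 + (2 * γ * C₀ + γ * m + 4 * γ * d) / c)
    (hD : D = 4 * C₁ ^ 2 * (1 + 2 * A) + 2 * γ ^ 2 * A)
    (X V B ξ : ℕ → Ω → E) (hB : ∀ n ω, ‖B n ω‖ ≤ C₁ * (1 + ‖X n ω‖))
    (hd : ∀ n ω, m * ‖X n ω‖ ^ 2 - C₀ ≤ ⟪X n ω, B n ω⟫)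
    (hX2 : ∀ n, MemLp (X n) 2 P) (hV2 : ∀ n, MemLp (V n) 2 P) (hB2 : ∀ n, MemLp (B n) 2 P)
    (hξ2 : ∀ n, MemLp (ξ n) 2 P) (hξd : ∀ n, ∫ ω, ‖ξ n ω‖ ^ 2 ∂P = d)
    (hXs : ∀ n ω, X (n + 1) ω = X n ω + h • V n ω)
    (hVs : ∀ n ω, V (n + 1) ω = V n ω - h • B n ω - (γ * h) • V n ω
            + Real.sqrt (2 * γ * h) • ξ n ω)
    (hoX : ∀ n, ∫ ω, ⟪X n ω, ξ n ω⟫ ∂P = 0) (hoV : ∀ n, ∫ ω, ⟪V n ω, ξ n ω⟫ ∂P = 0)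
    (hoB : ∀ n, ∫ ω, ⟪B n ω, ξ n ω⟫ ∂P = 0)
    (ho : ∀ n, ∫ ω, ⟪∑ k ∈ Finset.range n, ξ k ω, ξ n ω⟫ ∂P = 0) (N : ℕ) :
    ∫ ω, (‖X N ω - X 0 ω‖ ^ 2 + ‖V N ω - V 0 ω‖ ^ 2) ∂P ≤
      (12 * A + A + 2 * D + 4 * γ * d) * N * h * ∫ ω, (‖X 0 ω‖ + ‖V 0 ω‖ + 1) ^ 2 ∂P := by
  have hγ0 : 0 < γ := by linarith
  have hMint : Integrable (fun ω => (‖X 0 ω‖ + ‖V 0 ω‖ + 1) ^ 2) P :=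
    (((hX2 0).norm.add (hV2 0).norm).add (memLp_const 1)).integrable_sq
  set M := ∫ ω, (‖X 0 ω‖ + ‖V 0 ω‖ + 1) ^ 2 ∂P with hM
  have hM1 : 1 ≤ M := by
    have := integral_mono (integrable_const (1:ℝ)) hMint (fun ω => by
      have h1 := norm_nonneg (X 0 ω)
      have h2 := norm_nonneg (V 0 ω)
      show (1:ℝ) ≤ (‖X 0 ω‖ + ‖V 0 ω‖ + 1) ^ 2
      nlinarith)
    simpa using this
  have hLint : ∀ n, Integrable (fun ω => ‖γ • X n ω + V n ω‖ ^ 2 + ‖V n ω‖ ^ 2) P := fun n =>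
    (int_sq (((hX2 n).const_smul γ).add (hV2 n))).add (int_sq (hV2 n))
  have hA0 : 0 ≤ A := by rw [hA]; positivity
  have hD0 : 0 ≤ D := by rw [hD]; positivity
  have hL0 : ∫ ω, (‖γ • X 0 ω + V 0 ω‖ ^ 2 + ‖V 0 ω‖ ^ 2) ∂P ≤ (2 * γ ^ 2 + 3) * M := by
    rw [hM, ← integral_const_mul]
    refine integral_mono (hLint 0) (hMint.const_mul _) fun ω => ?_
    have h1 : ‖γ • X 0 ω + V 0 ω‖ ≤ γ * ‖X 0 ω‖ + ‖V 0 ω‖ := by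
      refine (norm_add_le _ _).trans ?_
      rw [norm_smul, Real.norm_eq_abs, abs_of_nonneg (by linarith)]
    have h2 := pow_le_pow_left₀ (norm_nonneg _) h1 2
    have h3 : (γ * ‖X 0 ω‖ + ‖V 0 ω‖) ^ 2 ≤ 2 * γ ^ 2 * ‖X 0 ω‖ ^ 2 + 2 * ‖V 0 ω‖ ^ 2 := by
      linarith [sq_nonneg (γ * ‖X 0 ω‖ - ‖V 0 ω‖)]
    have h4 : ‖X 0 ω‖ ^ 2 ≤ (‖X 0 ω‖ + ‖V 0 ω‖ + 1) ^ 2 := by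
      gcongr; linarith [norm_nonneg (V 0 ω)]
    have h5 : ‖V 0 ω‖ ^ 2 ≤ (‖X 0 ω‖ + ‖V 0 ω‖ + 1) ^ 2 := by
      gcongr; linarith [norm_nonneg (X 0 ω)]
    have h6 := mul_le_mul_of_nonneg_left h4 (by positivity : 0 ≤ 2 * γ ^ 2)
    show ‖γ • X 0 ω + V 0 ω‖ ^ 2 + ‖V 0 ω‖ ^ 2 ≤ _
    linarith
  have hLn : ∀ n, ∫ ω, (‖γ • X n ω + V n ω‖ ^ 2 + ‖V n ω‖ ^ 2) ∂P ≤ A * M := by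
    intro n
    have h1 := moment_bound d C₀ C₁ m γ h c hC₀ hC₁ hm hγ1 hγ h0 hh1 hh2 hc0 hc1 hc2 X V B ξ hB hd
      hX2 hV2 hB2 hξ2 hξd hXs hVs hoX hoV hoB n
    have hK : 0 ≤ (2 * γ * C₀ + γ * m + 4 * γ * d) / c := by positivity
    have h2 := mul_le_mul_of_nonneg_left hM1 hK
    rw [hA]
    linarith
  have hVn : ∀ n, ∫ ω, ‖V n ω‖ ^ 2 ∂P ≤ A * M := by
    intro n
    refine (integral_mono (int_sq (hV2 n)) (hLint n) fun ω => ?_).trans (hLn n)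
    show ‖V n ω‖ ^ 2 ≤ ‖γ • X n ω + V n ω‖ ^ 2 + ‖V n ω‖ ^ 2
    linarith [sq_nonneg ‖γ • X n ω + V n ω‖]
  have hXn : ∀ n, ∫ ω, ‖X n ω‖ ^ 2 ∂P ≤ 2 * (A * M) := by
    intro n
    refine (integral_mono (int_sq (hX2 n)) ((hLint n).const_mul 2) fun ω => ?_).trans ?_
    · show ‖X n ω‖ ^ 2 ≤ 2 * (‖γ • X n ω + V n ω‖ ^ 2 + ‖V n ω‖ ^ 2)
      have h1 : ‖X n ω‖ ≤ ‖γ • X n ω + V n ω‖ + ‖V n ω‖ := by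
        have h2 : ‖γ • X n ω‖ ≤ ‖γ • X n ω + V n ω‖ + ‖V n ω‖ := by
          have := norm_sub_le (γ • X n ω + V n ω) (V n ω)
          rwa [add_sub_cancel_right] at this
        rw [norm_smul, Real.norm_eq_abs, abs_of_pos hγ0] at h2
        nlinarith [norm_nonneg (X n ω)]
      have h2 := pow_le_pow_left₀ (norm_nonneg _) h1 2
      linarith [sq_nonneg (‖γ • X n ω + V n ω‖ - ‖V n ω‖)]
    · rw [integral_const_mul]
      linarith [hLn n]
  have hAM : 0 ≤ A * M := by positivity
  have iX : Integrable (fun ω => ‖X N ω - X 0 ω‖ ^ 2) P := int_sq ((hX2 N).sub (hX2 0))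
  have iV : Integrable (fun ω => ‖V N ω - V 0 ω‖ ^ 2) P := int_sq ((hV2 N).sub (hV2 0))
  have sq2 : ∀ a b : E, ‖a - b‖ ^ 2 ≤ 2 * ‖a‖ ^ 2 + 2 * ‖b‖ ^ 2 := by
    intro a b
    have := pow_le_pow_left₀ (norm_nonneg _) (norm_sub_le a b) 2
    linarith [sq_nonneg (‖a‖ - ‖b‖)]
  have dif : ∀ f g : Ω → E, MemLp f 2 P → MemLp g 2 P →
      ∫ ω, ‖f ω - g ω‖ ^ 2 ∂P ≤ 2 * ∫ ω, ‖f ω‖ ^ 2 ∂P + 2 * ∫ ω, ‖g ω‖ ^ 2 ∂P := by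
    intro f g hf hg
    have j1 := (int_sq hf).const_mul 2
    have j2 := (int_sq hg).const_mul 2
    rw [← integral_const_mul, ← integral_const_mul, ← integral_add j1 j2]
    exact integral_mono (int_sq (hf.sub hg)) (j1.add j2) fun ω => sq2 _ _
  rw [integral_add iX iV]
  have hNn : (0:ℝ) ≤ N := Nat.cast_nonneg N
  have hdn : (0:ℝ) ≤ 4 * γ * d := by positivity
  have hNh : 0 ≤ N * h := by positivity
  rcases le_total 1 (N * h) with hbig | hsmall
  · have h1 := dif _ _ (hX2 N) (hX2 0)
    have h2 := dif _ _ (hV2 N) (hV2 0)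
    have h3 := mul_le_mul_of_nonneg_left hbig hAM
    have h4 : 0 ≤ (A + 2 * D + 4 * γ * d) * (N * h) * M := by positivity
    linarith [hXn N, hXn 0, hVn N, hVn 0]
  · have hg2 : ∀ n, MemLp (fun ω => B n ω + γ • V n ω) 2 P := fun n =>
      (hB2 n).add ((hV2 n).const_smul γ)
    have hgn : ∀ n, ∫ ω, ‖B n ω + γ • V n ω‖ ^ 2 ∂P ≤ D * M := by
      intro n
      have j0 := (int_sq (hX2 n)).const_mul (4 * C₁ ^ 2)
      have j1 := (int_sq (hV2 n)).const_mul (2 * γ ^ 2)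
      have j2 : Integrable (fun _ : Ω => 4 * C₁ ^ 2) P := integrable_const _
      refine (integral_mono (int_sq (hg2 n)) ((j2.add j0).add j1) fun ω => ?_).trans ?_
      · show ‖B n ω + γ • V n ω‖ ^ 2 ≤ 4 * C₁ ^ 2 + 4 * C₁ ^ 2 * ‖X n ω‖ ^ 2
          + 2 * γ ^ 2 * ‖V n ω‖ ^ 2
        have k1 : ‖B n ω + γ • V n ω‖ ≤ C₁ * (1 + ‖X n ω‖) + γ * ‖V n ω‖ := by
          refine (norm_add_le _ _).trans ?_
          rw [norm_smul, Real.norm_eq_abs, abs_of_pos hγ0]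
          linarith [hB n ω]
        have k2 := pow_le_pow_left₀ (norm_nonneg _) k1 2
        have k3 := sq_nonneg (C₁ * (1 + ‖X n ω‖) - γ * ‖V n ω‖)
        have k4 := sq_nonneg (C₁ * (1 - ‖X n ω‖))
        linarith
      · rw [integral_add' (j2.add j0) j1, integral_add' j2 j0]
        simp only [integral_const_mul]
        rw [integral_const, probReal_univ, one_smul, hD]
        have k1 := mul_le_mul_of_nonneg_left (hXn n) (by positivity : 0 ≤ 4 * C₁ ^ 2)
        have k2 := mul_le_mul_of_nonneg_left (hVn n) (by positivity : 0 ≤ 2 * γ ^ 2)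
        have k3 := mul_le_mul_of_nonneg_left hM1 (by positivity : 0 ≤ 4 * C₁ ^ 2)
        linarith
    have eX : ∀ ω, X N ω - X 0 ω = h • ∑ n ∈ Finset.range N, V n ω := by
      intro ω
      rw [← Finset.sum_range_sub (fun n => X n ω), Finset.smul_sum]
      exact Finset.sum_congr rfl fun n _ => by rw [hXs]; module
    have eV : ∀ ω, V N ω - V 0 ω = Real.sqrt (2 * γ * h) • ∑ n ∈ Finset.range N, ξ n ω
        - h • ∑ n ∈ Finset.range N, (B n ω + γ • V n ω) := by
      intro ω
      rw [← Finset.sum_range_sub (fun n => V n ω), Finset.smul_sum, Finset.smul_sum,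
        ← Finset.sum_sub_distrib]
      exact Finset.sum_congr rfl fun n _ => by rw [hVs]; module
    have bX : ∫ ω, ‖X N ω - X 0 ω‖ ^ 2 ∂P ≤ h ^ 2 * (N ^ 2 * (A * M)) := by
      simp_rw [eX, norm_smul, mul_pow, Real.norm_eq_abs, sq_abs]
      rw [integral_const_mul]
      gcongr
      exact sum_bound V hV2 _ hVn N
    have bV : ∫ ω, ‖V N ω - V 0 ω‖ ^ 2 ∂P ≤ 2 * (2 * γ * h * (N * d))
        + 2 * (h ^ 2 * (N ^ 2 * (D * M))) := by
      simp_rw [eV]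
      have hS1 : MemLp (fun ω => ∑ n ∈ Finset.range N, ξ n ω) 2 P :=
        memLp_finsetSum _ fun n _ => hξ2 n
      have hS2 : MemLp (fun ω => ∑ n ∈ Finset.range N, (B n ω + γ • V n ω)) 2 P :=
        memLp_finsetSum _ fun n _ => hg2 n
      refine (dif _ _ (hS1.const_smul (Real.sqrt (2 * γ * h))) (hS2.const_smul h)).trans ?_
      simp_rw [Pi.smul_apply, norm_smul, mul_pow, Real.norm_eq_abs, sq_abs]
      rw [integral_const_mul, integral_const_mul, noise_bound d ξ hξ2 hξd ho N,
        Real.sq_sqrt (by positivity)]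
      gcongr
      exact sum_bound _ hg2 _ hgn N
    have hsq : (N * h) * (N * h) ≤ N * h := by nlinarith
    have q1 := mul_le_mul_of_nonneg_right hsq hAM
    have q2 := mul_le_mul_of_nonneg_right hsq (by positivity : 0 ≤ D * M)
    have q3 := mul_le_mul_of_nonneg_left hM1 (by positivity : 0 ≤ 4 * γ * d * (N * h))
    have q4 : 0 ≤ N * h * (A * M) := by positivity
    linarith

end

/-- diffusion estimate `E|Z̃_N − Z̃₀|² ≤ C·N·h·E(|X̃₀|+|Ṽ₀|+1)²` for the
stochastic gradient Euler–Maruyama chain for the underdamped Langevin dynamics,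
under A1, A2 and A4. -/
theorem statement15 (d : ℕ) (hd : 1 ≤ d) (U : EuclideanSpace ℝ (Fin d) → ℝ)
    (C₀ C₁ m R : ℝ) (hC₀ : 0 < C₀) (hC₁ : 0 < C₁) (hm : 0 < m) (hR : 0 < R)
    -- A1
    (hU : ContDiff ℝ 3 U)
    (hU0 : ∀ x, |U x| ≤ C₁ * (‖x‖ + 1) ^ 2)
    (hU1 : ∀ x, ‖gradient U x‖ ≤ C₁ * (‖x‖ + 1))
    (hU2 : ∀ x, ‖iteratedFDeriv ℝ 2 U x‖ ≤ C₁)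
    (hU3 : ∀ x, ‖iteratedFDeriv ℝ 3 U x‖ ≤ C₁)
    -- A2
    (hconv : ∀ x, R ≤ ‖x‖ → ∀ y, m * ‖y‖ ^ 2 ≤ iteratedFDeriv ℝ 2 U x ![y, y])
    -- A4: the stochastic gradient b on a probability space (Ω', 𝒢, μ)
    (Ω' : Type) (𝒢 : MeasurableSpace Ω') (μ : Measure Ω') (hμ : IsProbabilityMeasure μ)
    (b : EuclideanSpace ℝ (Fin d) → Ω' → EuclideanSpace ℝ (Fin d))
    (hbmeas : Measurable (Function.uncurry b))
    (hbgrowth : ∀ x ω', ‖b x ω'‖ ≤ C₁ * (1 + ‖x‖))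
    (hbdiff : ∀ ω', Differentiable ℝ (fun y => b y ω'))
    (hbderiv : ∀ x ω', ‖fderiv ℝ (fun y => b y ω') x‖ ≤ C₁)
    (hbdrift : ∀ x ω', m * ‖x‖ ^ 2 - C₀ ≤ ⟪x, b x ω'⟫)
    (hbunbiased : ∀ x, (∫ ω', b x ω' ∂μ) = gradient U x) :
    ∃ γ₀ > (0 : ℝ), ∀ γ ≥ γ₀, ∃ C > (0 : ℝ), ∃ h₀ > (0 : ℝ), ∀ h : ℝ, 0 < h → h ≤ h₀ →
      ∀ (Ω : Type) (_ : MeasurableSpace Ω) (P : Measure Ω), IsProbabilityMeasure P →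
      ∀ (X V ξ : ℕ → Ω → EuclideanSpace ℝ (Fin d)) (w : ℕ → Ω → Ω'),
        Measurable (X 0) → Measurable (V 0) →
        (∀ n, Measurable (ξ n)) → (∀ n, Measurable (w n)) →
        -- each ξ_n is a standard Gaussian random vector in ℝ^d
        (∀ n, Measure.map (fun ω i => ξ n ω i) P =
          Measure.pi fun _ : Fin d => gaussianReal 0 1) →
        -- each ω_n has law μ
        (∀ n, Measure.map (w n) P = μ) →
        -- (X₀,V₀), ξ₀, ξ₁, …, ω₀, ω₁, … are mutually independent
        iIndep (fun i : Option (ℕ ⊕ ℕ) =>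
          Option.elim i (MeasurableSpace.comap (fun ω => (X 0 ω, V 0 ω)) inferInstance)
            (Sum.elim (fun n => MeasurableSpace.comap (ξ n) inferInstance)
              fun n => MeasurableSpace.comap (w n) inferInstance)) P →
        -- stochastic gradient Euler–Maruyama recursion
        (∀ n ω, X (n + 1) ω = X n ω + h • V n ω) →
        (∀ n ω, V (n + 1) ω = V n ω - h • b (X n ω) (w n ω) - (γ * h) • V n ω
            + Real.sqrt (2 * γ * h) • ξ n ω) →
        -- finite initial second moment
        (∫⁻ ω, ENNReal.ofReal ((‖X 0 ω‖ + ‖V 0 ω‖ + 1) ^ 2) ∂P) < ∞ →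
        ∀ N : ℕ, 1 ≤ N →
          (∫⁻ ω, ENNReal.ofReal (‖X N ω - X 0 ω‖ ^ 2 + ‖V N ω - V 0 ω‖ ^ 2) ∂P) ≤
            ENNReal.ofReal (C * N * h) *
              ∫⁻ ω, ENNReal.ofReal ((‖X 0 ω‖ + ‖V 0 ω‖ + 1) ^ 2) ∂P := by
  refine ⟨32 * C₁ ^ 2 / m + 1, by positivity, fun γ hγ => ?_⟩
  have hγ1 : 1 ≤ γ := by
    have : 0 ≤ 32 * C₁ ^ 2 / m := by positivity
    linarith
  have hγ0 : 0 < γ := by linarith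
  have hγ2 : 32 * C₁ ^ 2 ≤ γ ^ 2 * m := by
    have h1 : 32 * C₁ ^ 2 / m ≤ γ := by linarith
    rw [div_le_iff₀ hm] at h1
    nlinarith
  obtain ⟨c, hc⟩ : ∃ c, c = min (m / (2 * γ)) (γ / 3) := ⟨_, rfl⟩
  have hc0 : 0 < c := by rw [hc]; positivity
  have hc1 : c * (2 * γ) ≤ m := by
    rw [← le_div_iff₀ (by positivity), hc]; exact min_le_left _ _
  have hc2 : 3 * c ≤ γ := by
    have : c ≤ γ / 3 := by rw [hc]; exact min_le_right _ _
    linarith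
  obtain ⟨A, hA⟩ : ∃ A, A = 2 * γ ^ 2 + 3 + (2 * γ * C₀ + γ * m + 4 * γ * d) / c := ⟨_, rfl⟩
  obtain ⟨D, hD⟩ : ∃ D, D = 4 * C₁ ^ 2 * (1 + 2 * A) + 2 * γ ^ 2 * A := ⟨_, rfl⟩
  have hA0 : 0 < A := by rw [hA]; positivity
  have hD0 : 0 < D := by rw [hD]; positivity
  refine ⟨12 * A + A + 2 * D + 4 * γ * d, by positivity,
    min (1 / (2 * γ)) (γ * m / (8 * C₁ ^ 2)), by positivity, ?_⟩
  intro h h0 hh Ω mΩ P hP X V ξ w hX0 hV0 hξ hw hlaw _ hind hXs hVs hfin N _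
  have hh1 : γ * h ≤ 1 / 2 := by
    have := hh.trans (min_le_left _ _)
    rw [le_div_iff₀ (by positivity)] at this
    linarith
  have hh2 : 8 * C₁ ^ 2 * h ≤ γ * m := by
    have := hh.trans (min_le_right _ _)
    rw [le_div_iff₀ (by positivity)] at this
    linarith
  have hle : ∀ i, (Option.elim i (MeasurableSpace.comap (fun ω => (X 0 ω, V 0 ω)) inferInstance)
            (Sum.elim (fun n => MeasurableSpace.comap (ξ n) inferInstance)
              fun n => MeasurableSpace.comap (w n) inferInstance) : MeasurableSpace Ω) ≤ mΩ := by
    rintro (_ | n | n)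
    · exact (hX0.prodMk hV0).comap_le
    · exact (hξ n).comap_le
    · exact (hw n).comap_le
  set F : Option (ℕ ⊕ ℕ) → MeasurableSpace Ω := fun i =>
    Option.elim i (MeasurableSpace.comap (fun ω => (X 0 ω, V 0 ω)) inferInstance)
            (Sum.elim (fun n => MeasurableSpace.comap (ξ n) inferInstance)
              fun n => MeasurableSpace.comap (w n) inferInstance) with hF
  obtain ⟨S, hS⟩ : ∃ S : ℕ → Set (Option (ℕ ⊕ ℕ)), S = fun n => {i | ∀ k, n ≤ k → i ≠ some (Sum.inl k)} :=
    ⟨_, rfl⟩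
  obtain ⟨G, hG⟩ : ∃ G : ℕ → MeasurableSpace Ω, G = fun n => ⨆ i ∈ S n, F i := ⟨_, rfl⟩
  have hFG : ∀ n i, i ∈ S n → F i ≤ G n := by
    intro n i hi
    rw [hG]
    exact le_iSup₂_of_le i hi le_rfl
  have hGm : ∀ n, G n ≤ mΩ := fun n => by rw [hG]; exact iSup₂_le fun i _ => hle i
  have hmono : ∀ n k, n ≤ k → G n ≤ G k := by
    intro n k hnk
    rw [hG]
    refine biSup_mono fun i hi => ?_
    rw [hS] at hi ⊢
    exact fun l hl => hi l (hnk.trans hl)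
  have hGind : ∀ n, Indep (G n) (MeasurableSpace.comap (ξ n) inferInstance) P := by
    intro n
    have h1 := indep_iSup_of_disjoint hle hind (S := S n) (T := {some (Sum.inl n)}) (by
      rw [Set.disjoint_singleton_right, hS]
      exact fun h => h n le_rfl rfl)
    rw [hG]
    simpa [hF] using h1
  have hwG : ∀ n, Measurable[G n] (w n) := fun n =>
    (comap_measurable (w n)).mono (hFG n (some (Sum.inr n)) (by rw [hS]; simp)) le_rfl
  have hξG : ∀ n k, n < k → Measurable[G k] (ξ n) := fun n k hnk =>
    (comap_measurable (ξ n)).mono (hFG k (some (Sum.inl n)) (by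
      rw [hS]
      intro l hl he
      have : n = l := by simpa using he
      omega)) le_rfl
  have h0G : Measurable[G 0] (fun ω => (X 0 ω, V 0 ω)) :=
    (comap_measurable _).mono (hFG 0 none (by rw [hS]; simp)) le_rfl
  have hmB : ∀ n, Measurable[G n] (X n) → Measurable[G n] (fun ω => b (X n ω) (w n ω)) := by
    intro n hX
    exact hbmeas.comp (hX.prodMk (hwG n))
  have hXVG : ∀ n, Measurable[G n] (X n) ∧ Measurable[G n] (V n) := by
    intro n
    induction n with
    | zero => exact ⟨measurable_fst.comp h0G, measurable_snd.comp h0G⟩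
    | succ n ih =>
      have i1 := ih.1.mono (hmono n (n+1) n.le_succ) le_rfl
      have i2 := ih.2.mono (hmono n (n+1) n.le_succ) le_rfl
      have i3 := (hmB n ih.1).mono (hmono n (n+1) n.le_succ) le_rfl
      have i4 := hξG n (n+1) n.lt_succ_self
      rw [funext (hXs n), funext (hVs n)]
      exact ⟨i1.add (i2.const_smul h), ((i2.sub (i3.const_smul h)).sub (i2.const_smul (γ * h))).add
        (i4.const_smul (Real.sqrt (2 * γ * h)))⟩
  have hξf := fun n => gauss_facts (ξ n) (hξ n) (hlaw n)
  have hfinI : Integrable (fun ω => (‖X 0 ω‖ + ‖V 0 ω‖ + 1) ^ 2) P := by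
    refine ⟨by fun_prop, ?_⟩
    rw [hasFiniteIntegral_iff_ofReal (ae_of_all _ fun ω => by positivity)]
    exact hfin
  have hX02 : MemLp (X 0) 2 P := by
    rw [memLp_two_iff_integrable_sq_norm hX0.aestronglyMeasurable]
    refine hfinI.mono' (by fun_prop) (ae_of_all _ fun ω => ?_)
    rw [Real.norm_eq_abs, abs_of_nonneg (by positivity)]
    gcongr
    linarith [norm_nonneg (V 0 ω)]
  have hV02 : MemLp (V 0) 2 P := by
    rw [memLp_two_iff_integrable_sq_norm hV0.aestronglyMeasurable]
    refine hfinI.mono' (by fun_prop) (ae_of_all _ fun ω => ?_)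
    rw [Real.norm_eq_abs, abs_of_nonneg (by positivity)]
    gcongr
    linarith [norm_nonneg (X 0 ω)]
  have hB2' : ∀ n, MemLp (X n) 2 P → MemLp (fun ω => b (X n ω) (w n ω)) 2 P := by
    intro n hX
    have h1 : MemLp (fun ω => C₁ * (1 + ‖X n ω‖)) 2 P :=
      ((memLp_const (1:ℝ)).add hX.norm).const_mul C₁
    refine h1.mono' ((hmB n (hXVG n).1).mono (hGm n) le_rfl).aestronglyMeasurable
      (ae_of_all _ fun ω => hbgrowth _ _)
  have hXV2 : ∀ n, MemLp (X n) 2 P ∧ MemLp (V n) 2 P := by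
    intro n
    induction n with
    | zero => exact ⟨hX02, hV02⟩
    | succ n ih =>
      rw [funext (hXs n), funext (hVs n)]
      exact ⟨ih.1.add (ih.2.const_smul h),
        ((ih.2.sub ((hB2' n ih.1).const_smul h)).sub (ih.2.const_smul (γ * h))).add
          ((hξf n).1.const_smul (Real.sqrt (2 * γ * h)))⟩
  have orth : ∀ n (f : Ω → EuclideanSpace ℝ (Fin d)), Measurable[G n] f → MemLp f 2 P →
      ∫ ω, ⟪f ω, ξ n ω⟫ ∂P = 0 := fun n f hf hf2 =>
    inner_zero (G n) (hGm n) f (ξ n) hf hf2 (hξf n).1 (hGind n) (hξf n).2.1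
  have main := diffusion d C₀ C₁ m γ h c A D hC₀ hC₁ hm hγ1 hγ2 h0 hh1 hh2 hc0 hc1 hc2 hA hD
    X V (fun n ω => b (X n ω) (w n ω)) ξ (fun n ω => hbgrowth _ _) (fun n ω => hbdrift _ _)
    (fun n => (hXV2 n).1) (fun n => (hXV2 n).2) (fun n => hB2' n (hXV2 n).1) (fun n => (hξf n).1)
    (fun n => (hξf n).2.2) hXs hVs (fun n => orth n _ (hXVG n).1 (hXV2 n).1)
    (fun n => orth n _ (hXVG n).2 (hXV2 n).2)
    (fun n => orth n _ (hmB n (hXVG n).1) (hB2' n (hXV2 n).1))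
    (fun n => orth n _ (Finset.measurable_fun_sum _ fun k hk => hξG k n (Finset.mem_range.1 hk))
      (memLp_finsetSum _ fun k _ => (hξf k).1)) N
  have iX : Integrable (fun ω => ‖X N ω - X 0 ω‖ ^ 2 + ‖V N ω - V 0 ω‖ ^ 2) P :=
    (int_sq ((hXV2 N).1.sub hX02)).add (int_sq ((hXV2 N).2.sub hV02))
  rw [← ofReal_integral_eq_lintegral_ofReal iX (ae_of_all _ fun ω => by positivity),
    ← ofReal_integral_eq_lintegral_ofReal hfinI (ae_of_all _ fun ω => by positivity),
    ← ENNReal.ofReal_mul (by positivity)]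
  exact ENNReal.ofReal_le_ofReal main
end
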